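/- arXiv:math/0302037 — 3 statements merged into one kernel-verified Lean document; each statement's English description precedes it below -/
import Mathlib

section
/- Let x, y ∈ W_n with x ≤ y in the Bruhat order, ℓ_t(x) = ℓ_t(y) = l, and y ∈ X_n^{(l)}·𝔖_{l,n−l}. Then x ∈ X_n^{(l)}·𝔖_{l,n−l}. -/
open scoped Classical

noncomputable section

/-! ## The hyperoctahedral group `W_n` as signed permutations of `I_n ⊆ ℤ` -/

abbrev P := Equiv.Perm ℤ

/-- `W_n` : permutations of `I_n = {±1, …, ±n}` commuting with `i ↦ -i`,
realized as permutations of `ℤ` fixing everything outside `I_n`. -/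
def Wset (n : ℕ) : Set P :=
  {π | (∀ i : ℤ, π (-i) = - π i) ∧ ∀ i : ℤ, (n : ℤ) < |i| → π i = i}

/-- the generator `t = (1, -1)` -/
def tgen : P := Equiv.swap 1 (-1)

/-- the generator `s_i = (i, i+1)(-i, -(i+1))` -/
def sgen (i : ℕ) : P :=
  Equiv.swap (i : ℤ) ((i : ℤ) + 1) * Equiv.swap (-(i : ℤ)) (-((i : ℤ) + 1))

/-- the generating set `S_n = {t, s_1, …, s_{n-1}}` -/
def Sset (n : ℕ) : Set P := insert tgen (sgen '' Set.Icc 1 (n - 1))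

/-- the length function of `W_n` with respect to `S_n` -/
def len (n : ℕ) (w : P) : ℕ :=
  sInf {k | ∃ l : List P, (∀ g ∈ l, g ∈ Sset n) ∧ l.prod = w ∧ l.length = k}

/-- number of occurrences of `tgen` in a list -/
def tcount (l : List P) : ℕ := (l.map (fun g => if g = tgen then 1 else 0)).sum

/-- `ℓ_t(w)` : the number of occurrences of `t` in a (any) reduced expression of `w` -/
def tlen (n : ℕ) (w : P) : ℕ :=
  sInf {k | ∃ l : List P, (∀ g ∈ l, g ∈ Sset n) ∧ l.prod = w ∧
    l.length = len n w ∧ tcount l = k}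

/-- the Bruhat order on `W_n` : `x ≤ y` iff some reduced expression of `y`
has a subword whose product is `x`. -/
def bruhat (n : ℕ) (x y : P) : Prop :=
  ∃ l l' : List P, (∀ g ∈ l, g ∈ Sset n) ∧ l.prod = y ∧ l.length = len n y ∧
    List.Sublist l' l ∧ l'.prod = x

/-! ## Generalized Robinson–Schensted correspondence -/

abbrev Tab := List (List ℕ)

/-- row insertion of `x` into one row; returns the new row and the bumped entry (if any) -/
def insRow (x : ℕ) : List ℕ → List ℕ × Option ℕ
  | [] => ([x], none)
  | y :: ys =>
    if x < y then (x :: ys, some y)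
    else
      let p := insRow x ys
      (y :: p.1, p.2)

/-- Schensted insertion of `x` into a tableau; returns the new tableau
and the (row, column) coordinates of the newly created box. -/
def insTab (x : ℕ) : Tab → Tab × ℕ × ℕ
  | [] => ([[x]], 0, 0)
  | row :: rest =>
    let p := insRow x row
    match p.2 with
    | none => (p.1 :: rest, 0, row.length)
    | some b =>
      let q := insTab b rest
      (p.1 :: q.1, q.2.1 + 1, q.2.2)

/-- place the label `lbl` at the end of row `pos.1` of the recording tableau -/
def place (lbl : ℕ) (pos : ℕ × ℕ) (T : Tab) : Tab :=
  if pos.1 < T.length then T.set pos.1 ((T.getD pos.1 []) ++ [lbl]) else T ++ [[lbl]]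

/-- one step of the generalized RS algorithm: insert `|π(i)|` into `A⁺` or `A⁻`
according to the sign of `π(i)`, and record `i` in the corresponding `B`-tableau. -/
def RSstep (π : P) (st : (Tab × Tab) × (Tab × Tab)) (i : ℕ) : (Tab × Tab) × (Tab × Tab) :=
  let v := (π (i : ℤ)).natAbs
  if 0 < π (i : ℤ) then
    let p := insTab v st.1.1
    ((p.1, st.1.2), (place i p.2 st.2.1, st.2.2))
  else
    let p := insTab v st.1.2
    ((st.1.1, p.1), (st.2.1, place i p.2 st.2.2))

def RSfull (n : ℕ) (π : P) : (Tab × Tab) × (Tab × Tab) :=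
  (((List.range n).map (· + 1)).foldl (RSstep π)) ((([], []), ([], [])))

/-- the insertion bitableau `A_n(π) = (A⁺, A⁻)` -/
def Atab (n : ℕ) (π : P) : Tab × Tab := (RSfull n π).1

/-- the recording bitableau `B_n(π) = (B⁺, B⁻)` -/
def Btab (n : ℕ) (π : P) : Tab × Tab := (RSfull n π).2

/-- `T` is a standard Young tableau -/
def IsStdTab (T : Tab) : Prop :=
  (∀ row ∈ T, row ≠ [] ∧ row.Chain' (· < ·)) ∧
  T.Chain' (fun r1 r2 => r2.length ≤ r1.length) ∧
  ∀ i j : ℕ, i + 1 < T.length → j < (T.getD (i + 1) []).length →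
    (T.getD i []).getD j 0 < (T.getD (i + 1) []).getD j 0

/-- `(T₁, T₂)` is an `n`-standard bitableau: both standard, entry sets disjoint
with union `{1, …, n}` -/
def IsNStdBitab (n : ℕ) (p : Tab × Tab) : Prop :=
  IsStdTab p.1 ∧ IsStdTab p.2 ∧ (p.1.flatten ++ p.2.flatten).Perm (List.range' 1 n)

/-- the shape of a bitableau -/
def shape2 (p : Tab × Tab) : List ℕ × List ℕ := (p.1.map List.length, p.2.map List.length)

/-! ## Knuth relations -/

/-- `t_i = (i, -i)` -/
def ttgen (i : ℕ) : P := Equiv.swap (i : ℤ) (-(i : ℤ))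

/-- `S'_n = S_n ∪ {t_1, …, t_n}` -/
def Sprime (n : ℕ) : Set P := Sset n ∪ (ttgen '' Set.Icc 1 n)

/-- the extended left descent set `L'(w)` -/
def Ldesc (n : ℕ) (w : P) : Set P := {u ∈ Sprime n | len n (u * w) < len n w}

/-- the elementary relation `x —s→ y` -/
def knuthStep (n : ℕ) (x y : P) : Prop :=
  ∃ i ∈ Set.Icc 1 (n - 1), y = sgen i * x ∧ len n x < len n y ∧
    ¬ (Ldesc n x ⊆ Ldesc n y)

/-- the relation `x ↔_L y` -/
def knuthRel (n : ℕ) : P → P → Prop :=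
  Relation.ReflTransGen (fun a b => knuthStep n a b ∨ knuthStep n b a)

/-! ## Parabolic subgroups, coset representatives and the decomposition -/

/-- the parabolic subgroup `𝔖_n = ⟨s_1, …, s_{n-1}⟩` -/
def SymN (n : ℕ) : Subgroup P := Subgroup.closure (sgen '' Set.Icc 1 (n - 1))

/-- the parabolic subgroup `𝔖_{l, n-l} = ⟨{s_1, …, s_{n-1}} \ {s_l}⟩` -/
def SymLR (n l : ℕ) : Subgroup P :=
  Subgroup.closure (sgen '' {i | 1 ≤ i ∧ i ≤ n - 1 ∧ i ≠ l})

/-- `Y_{l, n-l}` : minimal length representatives of left cosets of `𝔖_{l,n-l}` in `𝔖_n` -/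
def Yset (n l : ℕ) : Set P :=
  {w | w ∈ SymN n ∧ ∀ u ∈ SymLR n l, len n w ≤ len n (w * u)}

/-- `X_n` : minimal length representatives of the left cosets `w 𝔖_n` in `W_n` -/
def Xset (n : ℕ) : Set P :=
  {w | w ∈ Wset n ∧ ∀ u ∈ SymN n, len n w ≤ len n (w * u)}

/-- `X_n^{(l)}` -/
def Xl (n l : ℕ) : Set P := {w ∈ Xset n | tlen n w = l}

/-- `r_1 = t`, `r_{i+1} = s_i r_i` -/
def rgen : ℕ → P
  | 0 => 1
  | 1 => tgen
  | (i + 2) => sgen (i + 1) * rgen (i + 1)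

/-- `a_l = r_1 r_2 ⋯ r_l` -/
def al (l : ℕ) : P := ((List.range l).map (fun k => rgen (k + 1))).prod

/-- the set `X_n^{(l)} ⬝ 𝔖_{l, n-l}` -/
def XSset (n l : ℕ) : Set P := Set.image2 (· * ·) (Xl n l) (SymLR n l : Set P)

/-- `w = a ⬝ a_l ⬝ σ ⬝ b⁻¹` is the canonical decomposition of `w`
(with `a, b ∈ Y_{l,n-l}`, `σ ∈ 𝔖_{l,n-l}` and additivity of lengths) -/
def IsDecomp (n l : ℕ) (w a σ b : P) : Prop :=
  a ∈ Yset n l ∧ b ∈ Yset n l ∧ σ ∈ SymLR n l ∧ w = a * al l * σ * b⁻¹ ∧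
    len n w = len n a + len n (al l) + len n σ + len n b

/-- the relation `w ⇝_L w'` -/
def squig (n : ℕ) (w w' : P) : Prop :=
  ∃ l a σ b a' σ', tlen n w = l ∧ tlen n w' = l ∧
    IsDecomp n l w a σ b ∧ IsDecomp n l w' a' σ' b ∧ knuthRel n σ σ'

/-! ## The two-parameter Iwahori–Hecke algebra and Kazhdan–Lusztig data -/

/-- the ring `A = ℤ[V^{±1}, v^{±1}]`, as the group algebra of `Γ = ℤ × ℤ`
(a monomial `V^i v^j` corresponds to `(i,j) ∈ ℤ × ℤ`). -/
abbrev RR := AddMonoidAlgebra ℤ (ℤ × ℤ)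

/-- the monomial with exponent `g` -/
def mono (g : ℤ × ℤ) : RR := AddMonoidAlgebra.single g 1

/-- `Γ₋` for the lexicographic order with `V ≫ v`: `V^i v^j < 1` -/
def Gneg (g : ℤ × ℤ) : Prop := g.1 < 0 ∨ (g.1 = 0 ∧ g.2 < 0)

/-- an element of `ℤ[Γ₋]` : all monomials lie in `Γ₋` -/
def inNeg (f : RR) : Prop := ∀ g ∈ f.coeff.support, Gneg g

/-- the bar involution of `A`, `V ↦ V⁻¹`, `v ↦ v⁻¹` -/
def barR : RR → RR := fun f => .ofCoeff (Finsupp.equivMapDomain (Equiv.neg (ℤ × ℤ)) f.coeff)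

/-- the parameter `v_s` of a generator (`v_t = V`, `v_{s_i} = v`) -/
def vgen (g : P) : RR := if g = tgen then mono (1, 0) else mono (0, 1)

/-- the inverse `v_s⁻¹` of the parameter of a generator -/
def vgenInv (g : P) : RR := if g = tgen then mono (-1, 0) else mono (0, -1)

/-- the free `A`-module with basis indexed by permutations; the Hecke algebra
`H_n` is carried by the elements supported on `W_n`. -/
abbrev HH := P →₀ RR

/-- the standard basis element `T_w` -/
def TT (w : P) : HH := Finsupp.single w 1

/-- All the data attached to the Iwahori–Hecke algebra `H_n` of `W_n` over
`A = ℤ[V^{±1}, v^{±1}]`: the multiplication, the bar involution, the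
Kazhdan–Lusztig basis `C_w = Σ_y P*_{y,w} T_y` (for the order on `Γ` given
by `Γ₊ = {V^i v^j : i > 0} ∪ {v^j : j > 0}`), and Lusztig's `M`-polynomials,
together with their defining properties. -/
structure KLData (n : ℕ) where
  mul : HH → HH → HH
  mul_add_left : ∀ a b c, mul (a + b) c = mul a c + mul b c
  mul_add_right : ∀ a b c, mul a (b + c) = mul a b + mul a c
  mul_smul_left : ∀ (r : RR) a b, mul (r • a) b = r • mul a b
  mul_smul_right : ∀ (r : RR) a b, mul a (r • b) = r • mul a b
  mul_assoc : ∀ a b c, mul (mul a b) c = mul a (mul b c)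
  one_mul : ∀ a, mul (TT 1) a = a
  mul_one : ∀ a, mul a (TT 1) = a
  /-- `T_w T_{w'} = T_{w w'}` when lengths add -/
  T_mul : ∀ w w', w ∈ Wset n → w' ∈ Wset n →
    len n (w * w') = len n w + len n w' → mul (TT w) (TT w') = TT (w * w')
  /-- the quadratic relations `T_s² = T_1 + (v_s - v_s⁻¹) T_s` -/
  T_sq : ∀ g ∈ Sset n, mul (TT g) (TT g) = TT 1 + (vgen g - vgenInv g) • TT g
  bar : HH → HH
  bar_add : ∀ a b, bar (a + b) = bar a + bar b
  bar_smul : ∀ (r : RR) a, bar (r • a) = barR r • bar a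
  bar_mul : ∀ a b, bar (mul a b) = mul (bar a) (bar b)
  /-- `bar T_s = T_s⁻¹ = T_s + (v_s⁻¹ - v_s) T_1` -/
  bar_gen : ∀ g ∈ Sset n, bar (TT g) = TT g + (vgenInv g - vgen g) • TT 1
  /-- the Kazhdan–Lusztig basis element `C_w`, whose coordinate at `T_y` is
  the polynomial `P*_{y,w}` -/
  C : P → HH
  /-- `P*_{w,w} = 1` -/
  C_self : ∀ w, C w w = 1
  /-- `P*_{y,w} = 0` unless `y ≤ w` -/
  C_supp : ∀ w y, C w y ≠ 0 → bruhat n y w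
  /-- `P*_{y,w} ∈ ℤ[Γ₋]` for `y < w` -/
  C_neg : ∀ w y, y ≠ w → inNeg (C w y)
  /-- `C_w` is bar-invariant -/
  C_bar : ∀ w, w ∈ Wset n → bar (C w) = C w
  /-- `M s w` is the finitely supported family `z ↦ M^s_{z,w}` -/
  M : P → P → (P →₀ RR)
  M_supp : ∀ s w z, (M s w) z ≠ 0 → bruhat n z w ∧ z ≠ w ∧ len n (s * z) < len n z
  /-- the symmetry condition `bar M^s_{y,w} = M^s_{y,w}` -/
  M_bar : ∀ s w z, barR ((M s w) z) = (M s w) z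
  /-- the condition `M^s_{y,w} + Σ_{y<z<w, sz<z} P*_{y,z} M^s_{z,w} - v_s P*_{y,w} ∈ ℤ[Γ₋]` -/
  M_cond : ∀ s ∈ Sset n, ∀ y w, len n (s * y) < len n y → len n w < len n (s * w) →
    bruhat n y w → y ≠ w →
    inNeg ((M s w) y + (M s w).sum (fun z m => if z = y then 0 else C z y * m)
      - vgen s * C w y)
  /-- `C_s C_w = C_{sw} + Σ_{z<w, sz<z} M^s_{z,w} C_z` when `sw > w` -/
  mulC_up : ∀ s ∈ Sset n, ∀ w ∈ Wset n, len n w < len n (s * w) →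
    mul (C s) (C w) = C (s * w) + (M s w).sum (fun z m => m • C z)
  /-- `C_s C_w = (v_s + v_s⁻¹) C_w` when `sw < w` -/
  mulC_down : ∀ s ∈ Sset n, ∀ w ∈ Wset n, len n (s * w) < len n w →
    mul (C s) (C w) = (vgen s + vgenInv s) • C w

/-- `P_{y,w} = v_y⁻¹ v_w P*_{y,w}` -/
def Ppoly (n : ℕ) (D : KLData n) (y w : P) : RR :=
  mono ((tlen n w : ℤ) - (tlen n y : ℤ),
        ((len n w : ℤ) - (tlen n w : ℤ)) - ((len n y : ℤ) - (tlen n y : ℤ))) * D.C w y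

/-- the `R`-polynomials : `bar T_w = Σ_y R_{y,w} T_y` -/
def Rpoly {n : ℕ} (D : KLData n) (y w : P) : RR := (D.bar (TT w)) y

/-- `y ≤_{L,s} w` : `C_y` occurs with non-zero coefficient in `C_s C_w`
(expressed in the `C`-basis), for some `s ∈ S_n`, `y ≠ w` -/
def leLelem {n : ℕ} (D : KLData n) (y w : P) : Prop :=
  ∃ s ∈ Sset n, len n w < len n (s * w) ∧ (y = s * w ∨ (D.M s w) y ≠ 0)

/-- the preorder `≤_L` -/
def leL {n : ℕ} (D : KLData n) : P → P → Prop := Relation.ReflTransGen (leLelem D)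

/-- the equivalence `∼_L`; its classes are the left cells -/
def simL {n : ℕ} (D : KLData n) (y w : P) : Prop := leL D y w ∧ leL D w y

/-- `f` is a polynomial in `q = v²` -/
def isPolyInQ (f : RR) : Prop := ∀ g ∈ f.coeff.support, g.1 = 0 ∧ 0 ≤ g.2 ∧ 2 ∣ g.2

end
/-- words in the generators -/
def IsW (n : ℕ) (L : List P) : Prop := ∀ g ∈ L, g ∈ Sset n

/-- reduced words -/
def Red (n : ℕ) (L : List P) : Prop :=
  IsW n L ∧ ∀ L', IsW n L' → L'.prod = L.prod → L.length ≤ L'.length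

/-- a generator with the pair of positions it exchanges -/
def GP (n : ℕ) (g : P) (a b : ℤ) : Prop :=
  (g = tgen ∧ a = -1 ∧ b = 1) ∨ ∃ i : ℕ, 1 ≤ i ∧ i < n ∧ g = sgen i ∧ a = i ∧ b = i + 1

theorem sgen_app (i : ℕ) (hi : 1 ≤ i) (j : ℤ) : sgen i j =
    if j = i then (i : ℤ) + 1 else if j = i + 1 then (i : ℤ) else
    if j = -i then -((i : ℤ) + 1) else if j = -((i : ℤ) + 1) then -(i : ℤ) else j := by
  simp only [sgen, Equiv.Perm.mul_apply, Equiv.swap_apply_def]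
  split_ifs <;> omega

theorem tgen_app (j : ℤ) : tgen j = if j = 1 then -1 else if j = -1 then 1 else j := by
  simp only [tgen, Equiv.swap_apply_def]

theorem S_GP {n : ℕ} {g : P} (hg : g ∈ Sset n) : ∃ a b, GP n g a b := by
  rcases hg with rfl | ⟨i, hi, rfl⟩
  · exact ⟨-1, 1, Or.inl ⟨rfl, rfl, rfl⟩⟩
  · have := hi.1
    have := hi.2
    exact ⟨i, i + 1, Or.inr ⟨i, by omega, by omega, rfl, rfl, rfl⟩⟩

theorem GP_S {n : ℕ} {g : P} {a b : ℤ} (hg : GP n g a b) : g ∈ Sset n := by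
  rcases hg with ⟨rfl, -⟩ | ⟨i, h1, h2, rfl, -⟩
  · exact Or.inl rfl
  · exact Or.inr ⟨i, ⟨h1, by omega⟩, rfl⟩

theorem sgen_S {n i : ℕ} (h1 : 1 ≤ i) (h2 : i < n) : sgen i ∈ Sset n :=
  Or.inr ⟨i, ⟨h1, by omega⟩, rfl⟩

theorem sgen_sq (i : ℕ) (hi : 1 ≤ i) : sgen i * sgen i = 1 := by
  ext j
  simp only [Equiv.Perm.mul_apply, sgen_app i hi, Equiv.Perm.one_apply]
  split_ifs <;> omega

theorem tgen_sq : tgen * tgen = 1 := by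
  simp [tgen]

theorem GP_sq {n : ℕ} {g : P} {a b : ℤ} (hg : GP n g a b) : g * g = 1 := by
  rcases hg with ⟨rfl, -⟩ | ⟨i, h1, h2, rfl, -⟩
  · exact tgen_sq
  · exact sgen_sq i h1

theorem S_W {n : ℕ} (hn : 1 ≤ n) {g : P} (hg : g ∈ Sset n) : g ∈ Wset n := by
  obtain ⟨a, b, ⟨rfl, -⟩ | ⟨i, h1, h2, rfl, -⟩⟩ := S_GP hg
  · constructor
    · intro j
      simp only [tgen_app]
      split_ifs <;> omega
    · intro j hj
      simp only [tgen_app]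
      rcases abs_cases j with h | h <;> split_ifs <;> omega
  · constructor
    · intro j
      simp only [sgen_app i h1]
      split_ifs <;> omega
    · intro j hj
      simp only [sgen_app i h1]
      rcases abs_cases j with h | h <;> split_ifs <;> omega

theorem W_mul {n : ℕ} {v w : P} (hv : v ∈ Wset n) (hw : w ∈ Wset n) : v * w ∈ Wset n := by
  constructor
  · intro i
    simp only [Equiv.Perm.mul_apply, hw.1, hv.1]
  · intro i hi
    simp only [Equiv.Perm.mul_apply, hw.2 i hi, hv.2 i hi]

theorem W_one {n : ℕ} : (1 : P) ∈ Wset n := ⟨fun _ => rfl, fun _ _ => rfl⟩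

theorem word_W {n : ℕ} (hn : 1 ≤ n) {L : List P} (hL : IsW n L) : L.prod ∈ Wset n := by
  induction L with
  | nil => exact W_one
  | cons g L ih =>
    rw [List.prod_cons]
    exact W_mul (S_W hn (hL g (by simp))) (ih fun h hh => hL h (by simp [hh]))

theorem W_zero {n : ℕ} {w : P} (hw : w ∈ Wset n) : w 0 = 0 := by
  have := hw.1 0
  simp at this
  omega

theorem W_ne {n : ℕ} {w : P} (hw : w ∈ Wset n) {j : ℤ} (hj : j ≠ 0) : w j ≠ 0 := by
  intro h
  apply hj
  apply w.injective
  rw [h, W_zero hw]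

theorem conj_step {n : ℕ} {p g h : P} {a b : ℤ} (hp : p ∈ Wset n) (hg : GP n g a b)
    (hh : h ∈ Sset n) (h1 : p a < p b) (h2 : h (p b) < h (p a)) : h * p = p * g := by
  have hinj : ∀ u v : ℤ, p u = p v ↔ u = v := fun u v => p.injective.eq_iff
  obtain ⟨c, d, ⟨rfl, -, -⟩ | ⟨k, k1, k2, rfl, -, -⟩⟩ := S_GP hh <;>
  obtain ⟨rfl, rfl, rfl⟩ | ⟨i, i1, i2, rfl, rfl, rfl⟩ := hg
  · have e := hp.1 1
    have n1 := W_ne hp (j := 1) (by norm_num)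
    have hc : p 1 = 1 := by
      simp only [tgen_app] at h2
      split_ifs at h2 <;> omega
    ext j
    simp only [Equiv.Perm.mul_apply]
    have f1 := hinj j 1
    have f2 := hinj j (-1)
    rw [tgen_app j]
    by_cases j1 : j = 1
    · subst j1; simp [tgen_app, hc, e]
    by_cases j2 : j = -1
    · subst j2; simp [tgen_app, hc, e]
    rw [if_neg j1, if_neg j2, tgen_app, if_neg, if_neg] <;> omega
  · exfalso
    have n1 := W_ne hp (j := i) (by omega)
    have n2 := W_ne hp (j := (i : ℤ) + 1) (by omega)
    have e := hp.1 i
    have f := hinj (-i) (i + 1)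
    simp only [tgen_app] at h2
    split_ifs at h2 <;> omega
  · exfalso
    have e := hp.1 1
    simp only [sgen_app k k1] at h2
    split_ifs at h2 <;> omega
  · have e1 := hp.1 i
    have e2 := hp.1 (i + 1)
    have hc : (p i = k ∧ p (i + 1) = k + 1) ∨ (p i = -(k + 1) ∧ p (i + 1) = -k) := by
      simp only [sgen_app k k1] at h2
      split_ifs at h2 <;> omega
    ext j
    simp only [Equiv.Perm.mul_apply]
    have f1 := hinj j i
    have f2 := hinj j (-i)
    have f3 := hinj j (i + 1)
    have f4 := hinj j (-(i + 1))
    rw [sgen_app i i1]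
    by_cases j1 : j = i
    · subst j1; rw [if_pos rfl, sgen_app k k1]; split_ifs <;> omega
    by_cases j2 : j = i + 1
    · subst j2; rw [if_neg (by omega), if_pos rfl, sgen_app k k1]; split_ifs <;> omega
    by_cases j3 : j = -i
    · subst j3; rw [if_neg (by omega), if_neg (by omega), if_pos rfl, sgen_app k k1]
      split_ifs <;> omega
    by_cases j4 : j = -(i + 1)
    · subst j4
      rw [if_neg (by omega), if_neg (by omega), if_neg (by omega), if_pos rfl, sgen_app k k1]
      split_ifs <;> omega
    rw [if_neg j1, if_neg j2, if_neg j3, if_neg j4, sgen_app k k1]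
    split_ifs <;> omega

theorem exch {n : ℕ} (hn : 1 ≤ n) {g : P} {a b : ℤ} (hg : GP n g a b) (L : List P)
    (hL : IsW n L) (hab : L.prod b < L.prod a) :
    ∃ L', IsW n L' ∧ L'.length + 1 = L.length ∧ L'.prod = L.prod * g := by
  induction L with
  | nil =>
    exfalso
    simp at hab
    rcases hg with ⟨-, rfl, rfl⟩ | ⟨i, -, -, -, rfl, rfl⟩ <;> omega
  | cons h L ih =>
    have hL2 : IsW n L := fun h hh => hL h (by simp [hh])
    have hh : h ∈ Sset n := hL h (by simp)
    rcases lt_trichotomy (L.prod b) (L.prod a) with h1 | h1 | h1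
    · obtain ⟨L', w, e1, e2⟩ := ih hL2 h1
      refine ⟨h :: L', ?_, by simp [← e1], by simp [e2, mul_assoc]⟩
      intro x hx
      rcases List.mem_cons.1 hx with rfl | hx
      · exact hh
      · exact w x hx
    · rw [List.prod_cons, Equiv.Perm.mul_apply, Equiv.Perm.mul_apply, h1] at hab
      exact absurd hab (lt_irrefl _)
    · refine ⟨L, hL2, by simp, ?_⟩
      rw [List.prod_cons, conj_step (word_W hn hL2) hg hh h1 hab, mul_assoc, GP_sq hg, mul_one]

theorem W_app {n : ℕ} {L L' : List P} (h : IsW n L) (h' : IsW n L') : IsW n (L ++ L') := by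
  intro g hg
  rcases List.mem_append.1 hg with hg | hg
  · exact h g hg
  · exact h' g hg

theorem red_dropLast {n : ℕ} (hn : 1 ≤ n) {g : P} {a b : ℤ} (hg : GP n g a b) {L : List P}
    (hr : Red n (L ++ [g])) : Red n L ∧ L.prod a < L.prod b := by
  have hL : IsW n L := fun h hh => hr.1 h (by simp [hh])
  refine ⟨⟨hL, fun L' w e => ?_⟩, ?_⟩
  · have := hr.2 (L' ++ [g]) (W_app w fun h hh => hr.1 h (by simp at hh; simp [hh])) (by simp [e])
    simpa using this
  · by_contra hcon
    have hne : L.prod a ≠ L.prod b := by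
      intro h
      have := L.prod.injective h
      rcases hg with ⟨-, rfl, rfl⟩ | ⟨i, -, -, -, rfl, rfl⟩ <;> omega
    obtain ⟨L', w, e1, e2⟩ := exch hn hg L hL (by omega)
    have := hr.2 L' w (by simp [e2])
    simp at this
    omega

/-- negativity indicator -/
def ee (w : P) (j : ℕ) : ℕ := if w (j : ℤ) < 0 then 1 else 0

/-- number of negative values at positions in `[k, n]` -/
def cc (n : ℕ) (w : P) (k : ℕ) : ℕ := ∑ j ∈ Finset.Icc k n, ee w j

theorem cc_rec {n k : ℕ} (w : P) (h : k ≤ n) : cc n w k = ee w k + cc n w (k + 1) := by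
  unfold cc
  rw [← Finset.sum_Ioc_add_eq_sum_Icc h, add_comm]
  have : Finset.Ioc k n = Finset.Icc (k + 1) n := by
    ext j
    simp only [Finset.mem_Ioc, Finset.mem_Icc]
    omega
  rw [this]

theorem cc_big {n k : ℕ} (w : P) (h : n < k) : cc n w k = 0 := by
  unfold cc
  rw [Finset.Icc_eq_empty (by omega)]
  rfl

theorem ee_s (w : P) (i j : ℕ) (hi : 1 ≤ i) : ee (w * sgen i) j =
    if j = i then ee w (i + 1) else if j = i + 1 then ee w i else ee w j := by
  unfold ee
  rw [Equiv.Perm.mul_apply, sgen_app i hi]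
  split_ifs <;> first | rfl | omega | (push_cast at *; omega)

theorem ee_t {n : ℕ} {w : P} (hw : w ∈ Wset n) (j : ℕ) : ee (w * tgen) j =
    if j = 1 then 1 - ee w 1 else ee w j := by
  have e := hw.1 1
  have := W_ne hw (j := 1) (by norm_num)
  unfold ee
  rw [Equiv.Perm.mul_apply, tgen_app]
  by_cases h : j = 1
  · subst h
    simp only [Nat.cast_one, if_true, e]
    split_ifs <;> omega
  · have a1 : ¬ ((j : ℤ) = 1) := by omega
    have a2 : ¬ ((j : ℤ) = -1) := by omega
    rw [if_neg a1, if_neg a2, if_neg h]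

theorem cc_congr {n k : ℕ} {v w : P} (h : ∀ j, k ≤ j → ee v j = ee w j) : cc n v k = cc n w k :=
  Finset.sum_congr rfl fun j hj => h j (Finset.mem_Icc.1 hj).1

theorem cc_s {n i : ℕ} (w : P) (hi : 1 ≤ i) (hin : i < n) (k : ℕ) : cc n (w * sgen i) k =
    if k = i + 1 then ee w i + cc n w (i + 2) else cc n w k := by
  have hge : ∀ k, i + 2 ≤ k → cc n (w * sgen i) k = cc n w k := by
    intro k hk
    apply cc_congr
    intro j hj
    rw [ee_s w i j hi, if_neg (by omega), if_neg (by omega)]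
  have h1 : cc n (w * sgen i) (i + 1) = ee w i + cc n w (i + 2) := by
    rw [cc_rec _ (by omega), hge _ le_rfl, ee_s w i _ hi, if_neg (by omega), if_pos rfl]
  have hle : ∀ m k, k + m = i → cc n (w * sgen i) k = cc n w k := by
    intro m
    induction m with
    | zero =>
      intro k hk
      obtain rfl : k = i := by omega
      rw [cc_rec _ (by omega), h1, ee_s w _ _ hi, if_pos rfl, cc_rec w (by omega : k ≤ n),
        cc_rec w (by omega : k + 1 ≤ n), Nat.add_assoc k 1 1]
      omega
    | succ m ih =>
      intro k hk
      rw [cc_rec _ (by omega), ih (k + 1) (by omega), ee_s w _ _ hi, if_neg (by omega),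
        if_neg (by omega), ← cc_rec w (by omega)]
  split_ifs with h
  · rw [h, h1]
  · rcases lt_or_ge i k with h' | h'
    · exact hge k (by omega)
    · exact hle (i - k) k (by omega)

theorem cc_t {n : ℕ} (hn : 1 ≤ n) {w : P} (hw : w ∈ Wset n) (k : ℕ) (hk : 1 ≤ k) :
    cc n (w * tgen) k = if k = 1 then (1 - ee w 1) + cc n w 2 else cc n w k := by
  have hge : ∀ k, 2 ≤ k → cc n (w * tgen) k = cc n w k := by
    intro k hk
    apply cc_congr
    intro j hj
    rw [ee_t hw, if_neg (by omega)]
  split_ifs with h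
  · rw [h, cc_rec _ hn, hge _ le_rfl, ee_t hw, if_pos rfl]
  · exact hge k (by omega)

theorem ee_le (w : P) (j : ℕ) : ee w j ≤ 1 := by
  unfold ee; split_ifs <;> omega

theorem ee_up {w : P} {i : ℕ} (h : w (i : ℤ) < w ((i : ℤ) + 1)) : ee w (i + 1) ≤ ee w i := by
  unfold ee; push_cast; split_ifs <;> omega

theorem ee_up_t {n : ℕ} {w : P} (hw : w ∈ Wset n) (h : w (-1) < w 1) : ee w 1 = 0 := by
  have := hw.1 1
  unfold ee
  rw [Nat.cast_one, if_neg (by omega)]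

theorem mono_step {n : ℕ} (hn : 1 ≤ n) {g : P} {a b : ℤ} (hg : GP n g a b) {x y : P}
    (hx : x ∈ Wset n) (hy : y ∈ Wset n) (hab : y a < y b)
    (h : ∀ k, 1 ≤ k → cc n x k ≤ cc n y k) :
    ∀ k, 1 ≤ k → cc n x k ≤ cc n (y * g) k ∧ cc n (x * g) k ≤ cc n (y * g) k := by
  intro k hk
  have hk' := h k hk
  rcases hg with ⟨rfl, rfl, rfl⟩ | ⟨i, i1, i2, rfl, rfl, rfl⟩
  · have e := ee_up_t hy hab
    rw [cc_t hn hx k hk, cc_t hn hy k hk]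
    by_cases h1 : k = 1
    · subst h1
      have := h 2 (by omega)
      have := cc_rec x hn
      simp only [Nat.reduceAdd] at this
      have := ee_le x 1
      simp only [if_true]
      constructor <;> omega
    · simp only [if_neg h1]
      exact ⟨hk', hk'⟩
  · have e := ee_up hab
    rw [cc_s x i1 i2, cc_s y i1 i2]
    by_cases h1 : k = i + 1
    · subst h1
      have a1 := h i (by omega)
      have a2 := h (i + 2) (by omega)
      have b1 := cc_rec x (by omega : i ≤ n)
      have b2 := cc_rec x (by omega : i + 1 ≤ n)
      have b3 := cc_rec y (by omega : i ≤ n)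
      have b4 := cc_rec y (by omega : i + 1 ≤ n)
      have := ee_le x i
      have := ee_le x (i + 1)
      have := ee_le y i
      have := ee_le y (i + 1)
      rw [if_pos rfl, if_pos rfl]
      simp only [Nat.add_assoc, Nat.reduceAdd] at *
      constructor <;> omega
    · simp only [if_neg h1]
      exact ⟨hk', hk'⟩

theorem bruhat_mono {n : ℕ} (hn : 1 ≤ n) (L : List P) : Red n L → ∀ L' : List P, L'.Sublist L →
    ∀ k, 1 ≤ k → cc n L'.prod k ≤ cc n L.prod k := by
  induction L using List.reverseRecOn with
  | nil =>
    intro _ L' h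
    rw [List.sublist_nil.1 h]
    intros; exact le_rfl
  | append_singleton L g ih =>
    intro hr L' hs k hk
    obtain ⟨a, b, hg⟩ := S_GP (hr.1 g (by simp))
    obtain ⟨hrL, hab⟩ := red_dropLast hn hg hr
    obtain ⟨L1, L2, rfl, s1, s2⟩ := List.sublist_append_iff.1 hs
    have hW1 : IsW n L1 := fun h hh => hrL.1 h (s1.subset hh)
    have key := mono_step hn hg (word_W hn hW1) (word_W hn hrL.1) hab (ih hrL L1 s1) k hk
    rw [List.prod_append, List.prod_append, List.prod_singleton]
    rcases List.sublist_singleton.1 s2 with rfl | rfl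
    · simpa using key.1
    · simpa using key.2

theorem sgen_ne_t {i : ℕ} (hi : 1 ≤ i) : sgen i ≠ tgen := by
  intro h
  have := congrArg (fun f : P => f (i + 1)) h
  simp only [sgen_app i hi, tgen_app] at this
  split_ifs at this <;> omega

theorem red_tcount {n : ℕ} (hn : 1 ≤ n) (L : List P) : Red n L → tcount L = cc n L.prod 1 := by
  induction L using List.reverseRecOn with
  | nil =>
    intro _
    have : ∀ j ∈ Finset.Icc 1 n, ee 1 j = 0 := by
      intro j _
      unfold ee
      rw [Equiv.Perm.one_apply, if_neg (by omega)]
    simp [tcount, cc, Finset.sum_eq_zero this]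
  | append_singleton L g ih =>
    intro hr
    obtain ⟨a, b, hg⟩ := S_GP (hr.1 g (by simp))
    obtain ⟨hrL, hab⟩ := red_dropLast hn hg hr
    have ht : tcount (L ++ [g]) = tcount L + if g = tgen then 1 else 0 := by simp [tcount]
    rw [ht, ih hrL, List.prod_append, List.prod_singleton]
    have hW := word_W hn hrL.1
    rcases hg with ⟨rfl, rfl, rfl⟩ | ⟨i, i1, i2, rfl, rfl, rfl⟩
    · rw [cc_t hn hW 1 le_rfl, cc_rec L.prod hn, ee_up_t hW hab]
      simp
      omega
    · rw [cc_s _ i1 i2, if_neg (sgen_ne_t i1), if_neg (by omega)]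
      rfl

theorem len_le {n : ℕ} {L : List P} (hL : IsW n L) : len n L.prod ≤ L.length :=
  Nat.sInf_le ⟨L, hL, rfl, rfl⟩

theorem len_red {n : ℕ} {L : List P} (hL : IsW n L) (h : L.length = len n L.prod) : Red n L := by
  refine ⟨hL, fun L' w e => ?_⟩
  rw [h, ← e]
  exact len_le w

theorem len_ex {n : ℕ} {L : List P} (hL : IsW n L) :
    ∃ L', IsW n L' ∧ L'.prod = L.prod ∧ L'.length = len n L.prod :=
  Nat.sInf_mem (s := {k | ∃ l : List P, (∀ g ∈ l, g ∈ Sset n) ∧ l.prod = L.prod ∧ l.length = k})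
    ⟨_, L, hL, rfl, rfl⟩

theorem tlen_eq {n : ℕ} (hn : 1 ≤ n) {L : List P} (hL : IsW n L) :
    tlen n L.prod = cc n L.prod 1 := by
  obtain ⟨L', w, e1, e2⟩ := len_ex hL
  obtain ⟨M, w, e1, e2, e3⟩ := Nat.sInf_mem (s := {k | ∃ l : List P, (∀ g ∈ l, g ∈ Sset n) ∧
    l.prod = L.prod ∧ l.length = len n L.prod ∧ tcount l = k}) ⟨_, L', w, e1, e2, rfl⟩
  have := red_tcount hn M (len_red w (by rw [e1, e2]))
  rw [e1] at this
  rw [← this]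
  exact e3.symm

theorem len_desc {n : ℕ} (hn : 1 ≤ n) {g : P} {a b : ℤ} (hg : GP n g a b) {L : List P}
    (hL : IsW n L) (hab : L.prod b < L.prod a) : len n (L.prod * g) < len n L.prod := by
  obtain ⟨M, w, e1, e2⟩ := len_ex hL
  rw [← e1] at hab
  obtain ⟨L', w', f1, f2⟩ := exch hn hg M w hab
  have := len_le w'
  rw [f2, e1] at this
  omega

theorem word_inv {n : ℕ} {L : List P} (hL : IsW n L) : ∃ L', IsW n L' ∧ L'.prod = L.prod⁻¹ := by
  refine ⟨L.reverse, fun g hg => hL g (by simpa using hg), ?_⟩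
  rw [List.prod_inv_reverse]
  congr 1
  rw [← List.map_reverse]
  symm
  conv_rhs => rw [← List.map_id L.reverse]
  apply List.map_congr_left
  intro g hg
  obtain ⟨a, b, h⟩ := S_GP (hL g (by simpa using hg))
  exact inv_eq_of_mul_eq_one_left (GP_sq h)

theorem cl_word {n : ℕ} {T : Set P} (hT : T ⊆ Sset n) {u : P} (hu : u ∈ Subgroup.closure T) :
    ∃ L, IsW n L ∧ L.prod = u := by
  induction hu using Subgroup.closure_induction with
  | mem x hx => exact ⟨[x], fun g hg => by simp at hg; subst hg; exact hT hx, by simp⟩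
  | one => exact ⟨[], fun g hg => by simp at hg, rfl⟩
  | mul x y _ _ hx hy =>
    obtain ⟨L, a, rfl⟩ := hx
    obtain ⟨M, b, rfl⟩ := hy
    exact ⟨L ++ M, W_app a b, by simp⟩
  | inv x _ hx =>
    obtain ⟨L, a, rfl⟩ := hx
    exact word_inv a

theorem T1 {n : ℕ} : sgen '' Set.Icc 1 (n - 1) ⊆ Sset n := fun _ h => Or.inr h

theorem T2 {n l : ℕ} : sgen '' {i | 1 ≤ i ∧ i ≤ n - 1 ∧ i ≠ l} ⊆ sgen '' Set.Icc 1 (n - 1) :=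
  Set.image_mono fun _ h => ⟨h.1, h.2.1⟩

theorem LR_le {n l : ℕ} : SymLR n l ≤ SymN n := Subgroup.closure_mono T2

/-- minimal elements of cosets -/
theorem ex_min {n : ℕ} (H : Subgroup P) (a : P) :
    ∃ u ∈ H, ∀ v ∈ H, len n (a * u) ≤ len n (a * v) := by
  have hne : {k | ∃ u ∈ H, len n (a * u) = k}.Nonempty := ⟨_, 1, H.one_mem, rfl⟩
  obtain ⟨u, hu, e⟩ := Nat.sInf_mem hne
  refine ⟨u, hu, fun v hv => ?_⟩
  rw [e]
  exact Nat.sInf_le ⟨v, hv, rfl⟩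

theorem min_inc {n : ℕ} (hn : 1 ≤ n) {L : List P} (hL : IsW n L) {i : ℕ} (h1 : 1 ≤ i) (h2 : i < n)
    (h : len n L.prod ≤ len n (L.prod * sgen i)) : L.prod i < L.prod (i + 1) := by
  by_contra hc
  have hne : L.prod (i : ℤ) ≠ L.prod (i + 1) := by
    intro h
    have := L.prod.injective h
    omega
  have := len_desc hn (Or.inr ⟨i, h1, h2, rfl, rfl, rfl⟩) hL
    (by omega : L.prod ((i : ℤ) + 1) < L.prod i)
  omega

theorem sym_range {n : ℕ} {u : P} (hu : u ∈ SymN n) :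
    ∀ j : ℤ, 1 ≤ j → j ≤ n → 1 ≤ u j ∧ u j ≤ n := by
  have key : ∀ j : ℤ, (1 ≤ j ∧ j ≤ n) ↔ (1 ≤ u j ∧ u j ≤ n) := by
    induction hu using Subgroup.closure_induction with
    | mem x hx =>
      obtain ⟨i, hi, rfl⟩ := hx
      have h1 := hi.1
      have h2 := hi.2
      intro j
      rw [sgen_app i h1]
      split_ifs <;> omega
    | one => intro j; rfl
    | mul x y _ _ hx hy => intro j; rw [hy j, hx (y j)]; rfl
    | inv x _ hx => intro j; rw [hx (x⁻¹ j)]; simp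
  intro j h1 h2
  exact (key j).1 ⟨h1, h2⟩

theorem inc_lt {n : ℕ} {w : P} (h : ∀ i : ℕ, 1 ≤ i → i < n → w i < w (i + 1)) (i j : ℕ)
    (hi : 1 ≤ i) (hij : i < j) (hj : j ≤ n) : w i < w j := by
  induction j with
  | zero => omega
  | succ j ih =>
    have := h j (by omega) (by omega)
    push_cast
    rcases Nat.lt_or_ge i j with h' | h'
    · exact (ih h' (by omega)).trans this
    · obtain rfl : i = j := by omega
      exact this

/-- a strictly increasing selfmap of `[1,n]` is the identity -/
theorem inc_id {n : ℕ} {u : P} (h : ∀ i : ℕ, 1 ≤ i → i < n → u i < u (i + 1))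
    (hr : ∀ j : ℤ, 1 ≤ j → j ≤ n → 1 ≤ u j ∧ u j ≤ n) (j : ℕ) (h1 : 1 ≤ j) (h2 : j ≤ n) :
    u j = j := by
  have lo : ∀ j : ℕ, 1 ≤ j → j ≤ n → (j : ℤ) ≤ u j := by
    intro j h1
    induction j, h1 using Nat.le_induction with
    | base => intro h; exact (hr _ (by norm_num) (by exact_mod_cast h)).1
    | succ j hj ih =>
      intro h'
      have := ih (by omega)
      have := h j hj (by omega)
      push_cast
      omega
  have hi : ∀ m j : ℕ, 1 ≤ j → j + m = n → u j ≤ j := by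
    intro m
    induction m with
    | zero => intro j h1 h2; have := (hr j (by omega) (by omega)).2; omega
    | succ m ih =>
      intro j h1 h2
      have a := ih (j + 1) (by omega) (by omega)
      have := h j h1 (by omega)
      push_cast at a
      omega
  exact le_antisymm (hi (n - j) j h1 (by omega)) (lo j h1 h2)

theorem inc_X {n : ℕ} (hn : 1 ≤ n) {L : List P} (hL : IsW n L)
    (h : ∀ i : ℕ, 1 ≤ i → i < n → L.prod i < L.prod (i + 1)) : L.prod ∈ Xset n := by
  refine ⟨word_W hn hL, ?_⟩
  obtain ⟨u, hu, hmin⟩ := ex_min (n := n) (SymN n) L.prod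
  obtain ⟨M, hM, rfl⟩ := cl_word T1 hu
  have hinc : ∀ i : ℕ, 1 ≤ i → i < n → (L.prod * M.prod) i < (L.prod * M.prod) (i + 1) := by
    intro i h1 h2
    have := min_inc hn (W_app hL hM) h1 h2
    rw [List.prod_append] at this
    apply this
    rw [mul_assoc]
    exact hmin _ ((SymN n).mul_mem hu (Subgroup.subset_closure ⟨i, ⟨h1, by omega⟩, rfl⟩))
  have hr := sym_range hu
  have hMW := word_W hn hM
  have hMinc : ∀ i : ℕ, 1 ≤ i → i < n → M.prod i < M.prod (i + 1) := by
    intro i h1 h2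
    have a := hinc i h1 h2
    simp only [Equiv.Perm.mul_apply] at a
    by_contra hc
    have r1 := hr i (by omega) (by omega)
    have r2 := hr (i + 1) (by omega) (by omega)
    have hne : M.prod (i : ℤ) ≠ M.prod (i + 1) := by
      intro h
      have := M.prod.injective h
      omega
    have := inc_lt h (M.prod (i + 1)).toNat (M.prod i).toNat (by omega) (by omega) (by omega)
    rw [Int.toNat_of_nonneg (by omega), Int.toNat_of_nonneg (by omega)] at this
    omega
  have hid := inc_id hMinc hr
  have : M.prod = 1 := by
    ext j
    rw [Equiv.Perm.one_apply]
    rcases lt_or_ge (n : ℤ) |j| with hj | hj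
    · exact hMW.2 j hj
    rcases lt_trichotomy j 0 with h0 | rfl | h0
    · have := hid (-j).toNat (by omega) (by rcases abs_cases j with h | h <;> omega)
      rw [Int.toNat_of_nonneg (by omega), hMW.1] at this
      omega
    · exact W_zero hMW
    · have := hid j.toNat (by omega) (by rcases abs_cases j with h | h <;> omega)
      rw [Int.toNat_of_nonneg (by omega)] at this
      omega
  rw [this, mul_one] at hmin
  exact hmin

/-- negative positions are exactly `1..l` -/
def NegL (n l : ℕ) (w : P) : Prop := ∀ j : ℕ, 1 ≤ j → j ≤ n → ee w j = if j ≤ l then 1 else 0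

theorem Neg_s {n l i : ℕ} {w : P} (h : NegL n l w) (h1 : 1 ≤ i) (h2 : i < n) (h3 : i ≠ l) :
    NegL n l (w * sgen i) := by
  intro j j1 j2
  have a := h i (by omega) (by omega)
  have b := h (i + 1) (by omega) (by omega)
  have c := h j j1 j2
  rw [ee_s w i j h1, a, b, c]
  split_ifs <;> omega

theorem Neg_LR {n l : ℕ} {u : P} (hu : u ∈ SymLR n l) : ∀ w, NegL n l w ↔ NegL n l (w * u) := by
  induction hu using Subgroup.closure_induction with
  | mem x hx =>
    obtain ⟨i, ⟨h1, h2, h3⟩, rfl⟩ := hx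
    intro w
    refine ⟨fun h => Neg_s h h1 (by omega) h3, fun h => ?_⟩
    have := Neg_s h h1 (by omega) h3
    rwa [mul_assoc, sgen_sq i h1, mul_one] at this
  | one => intro w; rw [mul_one]
  | mul x y _ _ hx hy => intro w; rw [hx, hy, mul_assoc]
  | inv x _ hx => intro w; rw [hx (w * x⁻¹)]; simp

/-- counts determine the negative positions -/
theorem Neg_cc {n l : ℕ} (hl : l ≤ n) {w : P} (h1 : cc n w 1 = l)
    (h : ∀ k, 1 ≤ k → cc n w k ≤ l + 1 - k) : NegL n l w := by
  have lo : ∀ k, k ≤ l → cc n w (k + 1) + k = l := by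
    intro k
    induction k with
    | zero => intro _; omega
    | succ k ih =>
      intro hk
      have a := ih (by omega)
      have b := h (k + 1 + 1) (by omega)
      have c := cc_rec w (by omega : k + 1 ≤ n)
      have := ee_le w (k + 1)
      omega
  intro j j1 j2
  have a := cc_rec w j2
  split_ifs with hj
  · have b := lo j hj
    have c := lo (j - 1) (by omega)
    rw [show j - 1 + 1 = j by omega] at c
    omega
  · have := h j j1
    omega

theorem cc_Neg {n l : ℕ} (hl : l ≤ n) {w : P} (h : NegL n l w) (k : ℕ) (hk : 1 ≤ k) :
    cc n w k = l + 1 - k := by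
  have key : ∀ m k, 1 ≤ k → k + m = n + 1 → cc n w k = l + 1 - k := by
    intro m
    induction m with
    | zero => intro k _ h; rw [cc_big w (by omega)]; omega
    | succ m ih =>
      intro k h1 h2
      rw [cc_rec w (by omega), ih (k + 1) (by omega) (by omega), h k h1 (by omega)]
      split_ifs <;> omega
  rcases Nat.lt_or_ge n k with h' | h'
  · rw [cc_big w h']; omega
  · exact key (n + 1 - k) k hk (by omega)

theorem inc_Neg {n l : ℕ} (hl : l ≤ n) {w : P} (h1 : cc n w 1 = l)
    (h : ∀ i : ℕ, 1 ≤ i → i < n → w i < w (i + 1)) : NegL n l w := by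
  -- once an entry is nonnegative, all later ones are
  have anti : ∀ i : ℕ, 1 ≤ i → i < n → ee w (i + 1) ≤ ee w i := fun i a b => ee_up (h i a b)
  have zero : ∀ j, 1 ≤ j → j ≤ n → ee w j = 0 → cc n w j = 0 := by
    intro j j1 j2 e
    have : ∀ i, j ≤ i → i ≤ n → ee w i = 0 := by
      intro i hi
      induction i, hi using Nat.le_induction with
      | base => intro _; exact e
      | succ i hi ih =>
        intro hh
        have := ih (by omega)
        have := anti i (by omega) (by omega)
        omega
    apply Finset.sum_eq_zero
    intro i hi
    rw [Finset.mem_Icc] at hi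
    exact this i hi.1 hi.2
  have key : ∀ k, k ≤ n → cc n w (k + 1) = l - k := by
    intro k
    induction k with
    | zero => intro _; simpa using h1
    | succ k ih =>
      intro hk
      have a := ih (by omega)
      have b := cc_rec w (by omega : k + 1 ≤ n)
      have := ee_le w (k + 1)
      have := zero (k + 1) (by omega) hk
      omega
  apply Neg_cc hl h1
  intro k hk
  rcases Nat.lt_or_ge n k with h' | h'
  · rw [cc_big w h']; omega
  · have := key (k - 1) (by omega)
    rw [show k - 1 + 1 = k by omega] at this
    omega

theorem XS_Neg {n l : ℕ} (hn : 1 ≤ n) (hl : l ≤ n) {L : List P} (hL : IsW n L)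
    (h : L.prod ∈ XSset n l) : NegL n l L.prod := by
  obtain ⟨a, ha, u, hu, e⟩ := h
  have e' : a * u = L.prod := e
  have hu' : u ∈ SymLR n l := hu
  obtain ⟨M, hM, eM⟩ := cl_word (T2.trans T1) ((SymLR n l).inv_mem hu')
  have ea : a = (L ++ M).prod := by rw [List.prod_append, eM, ← e']; group
  have hLM := W_app hL hM
  rw [← e', ← Neg_LR hu']
  have ht := tlen_eq hn hLM
  rw [← ea, ha.2] at ht
  apply inc_Neg hl ht.symm
  intro i h1 h2
  rw [ea]
  apply min_inc hn hLM h1 h2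
  rw [← ea]
  exact ha.1.2 _ (Subgroup.subset_closure ⟨i, ⟨h1, by omega⟩, rfl⟩)

theorem Neg_XS {n l : ℕ} (hn : 1 ≤ n) (hl : l ≤ n) {L : List P} (hL : IsW n L)
    (h : NegL n l L.prod) : L.prod ∈ XSset n l := by
  obtain ⟨u, hu, hmin⟩ := ex_min (n := n) (SymLR n l) L.prod
  obtain ⟨M, hM, rfl⟩ := cl_word (T2.trans T1) hu
  have hLM := W_app hL hM
  have hN : NegL n l (L ++ M).prod := by
    rw [List.prod_append]
    exact (Neg_LR hu _).1 h
  have hinc : ∀ i : ℕ, 1 ≤ i → i < n → (L ++ M).prod i < (L ++ M).prod (i + 1) := by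
    intro i h1 h2
    by_cases hil : i = l
    · have a := hN i h1 (by omega)
      have b := hN (i + 1) (by omega) (by omega)
      rw [if_pos (by omega)] at a
      rw [if_neg (by omega)] at b
      unfold ee at a b
      push_cast at b
      split_ifs at a b <;> omega
    · apply min_inc hn hLM h1 h2
      rw [List.prod_append, mul_assoc]
      exact hmin _ ((SymLR n l).mul_mem hu
        (Subgroup.subset_closure ⟨i, ⟨h1, by omega, hil⟩, rfl⟩))
  refine ⟨(L ++ M).prod, ⟨inc_X hn hLM hinc, ?_⟩, M.prod⁻¹, (SymLR n l).inv_mem hu, ?_⟩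
  · rw [tlen_eq hn hLM, cc_Neg hl hN 1 le_rfl]
    omega
  · simp

/-- If `x ≤ y` (Bruhat), `ℓ_t(x) = ℓ_t(y) = l` and
`y ∈ X_n^{(l)}·𝔖_{l,n-l}`, then `x ∈ X_n^{(l)}·𝔖_{l,n-l}`. -/
theorem XS_bruhat_closed (n l : ℕ) (hn : 1 ≤ n) (hl : l ≤ n) (x y : P)
    (hx : x ∈ Wset n) (hy : y ∈ Wset n) (hxy : bruhat n x y)
    (htx : tlen n x = l) (hty : tlen n y = l) (hyXS : y ∈ XSset n l) :
    x ∈ XSset n l := by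
  obtain ⟨L, L', hL, rfl, hlen, hs, rfl⟩ := hxy
  have hL' : IsW n L' := fun g hg => hL g (hs.subset hg)
  have hN := XS_Neg hn hl hL hyXS
  have hm := bruhat_mono hn L (len_red hL hlen) L' hs
  apply Neg_XS hn hl hL'
  apply Neg_cc hl
  · rw [← tlen_eq hn hL', htx]
  · intro k hk
    rw [← cc_Neg hl hN k hk]
    exact hm k hk
end

section
/- Let x, y ∈ W_n with ℓ_t(x) = ℓ_t(y) = l and x ≤ y in the Bruhat order. Then a_x ≤ a_y and b_x ≤ b_y. -/
open scoped Classical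

namespace DB

lemma app_inv (b : P) (a : ℤ) : b (b⁻¹ a) = a := b.apply_symm_apply a

lemma inv_app (b : P) (a : ℤ) : b⁻¹ (b a) = a := b.symm_apply_apply a

def IsWord (n : ℕ) (l : List P) : Prop := ∀ g ∈ l, g ∈ Sset n

lemma sgen_apply (i : ℕ) (hi : 1 ≤ i) (a : ℤ) :
    sgen i a = if a = i then (i : ℤ) + 1 else if a = i + 1 then (i : ℤ) else
      if a = -i then -((i : ℤ) + 1) else if a = -(i + 1) then -(i : ℤ) else a := by
  simp only [sgen, Equiv.Perm.mul_apply, Equiv.swap_apply_def]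
  split_ifs <;> omega

lemma tgen_apply (a : ℤ) : tgen a = if a = 1 then -1 else if a = -1 then 1 else a := by
  simp only [tgen, Equiv.swap_apply_def]

lemma gen_cases {n : ℕ} {g : P} (h : g ∈ Sset n) :
    g = tgen ∨ ∃ i : ℕ, 1 ≤ i ∧ i + 1 ≤ n ∧ g = sgen i := by
  rcases h with h | ⟨i, ⟨h1, h2⟩, rfl⟩
  · exact Or.inl h
  · exact Or.inr ⟨i, h1, by omega, rfl⟩

lemma sgen_mem {n i : ℕ} (h1 : 1 ≤ i) (h2 : i + 1 ≤ n) : sgen i ∈ Sset n :=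
  Or.inr ⟨i, ⟨h1, by omega⟩, rfl⟩

lemma sgen_sq (i : ℕ) (hi : 1 ≤ i) : sgen i * sgen i = 1 := by
  ext a
  simp only [Equiv.Perm.mul_apply, sgen_apply i hi, Equiv.Perm.one_apply]
  split_ifs <;> omega

lemma tgen_sq : tgen * tgen = 1 := Equiv.swap_mul_self _ _

lemma gen_sq {n : ℕ} {g : P} (h : g ∈ Sset n) : g * g = 1 := by
  rcases gen_cases h with rfl | ⟨i, h1, h2, rfl⟩
  · exact tgen_sq
  · exact sgen_sq i h1

lemma gen_inv {n : ℕ} {g : P} (h : g ∈ Sset n) : g⁻¹ = g :=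
  inv_eq_of_mul_eq_one_left (gen_sq h)

lemma gen_odd {n : ℕ} {g : P} (h : g ∈ Sset n) (a : ℤ) : g (-a) = - g a := by
  rcases gen_cases h with rfl | ⟨i, h1, h2, rfl⟩
  · simp only [tgen_apply]; split_ifs <;> omega
  · simp only [sgen_apply i h1]; split_ifs <;> omega

lemma word_odd {n : ℕ} {l : List P} (h : IsWord n l) (a : ℤ) : l.prod (-a) = - l.prod a := by
  induction l with
  | nil => simp
  | cons g l ih =>
    simp only [List.prod_cons, Equiv.Perm.mul_apply]
    rw [ih (fun g hg => h g (List.mem_cons_of_mem _ hg)), gen_odd (h g List.mem_cons_self)]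

lemma word_fix {n : ℕ} (hn : 1 ≤ n) {l : List P} (h : IsWord n l) (a : ℤ) (ha : (n : ℤ) < a) :
    l.prod a = a := by
  induction l with
  | nil => simp
  | cons g l ih =>
    simp only [List.prod_cons, Equiv.Perm.mul_apply]
    rw [ih (fun g hg => h g (List.mem_cons_of_mem _ hg))]
    rcases gen_cases (h g List.mem_cons_self) with rfl | ⟨i, h1, h2, rfl⟩
    · simp only [tgen_apply]; split_ifs <;> omega
    · simp only [sgen_apply i h1]; split_ifs <;> omega

def R (u v : ℤ) : P :=
  if u = -v then Equiv.swap u v else Equiv.swap u v * Equiv.swap (-u) (-v)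

lemma R_conj (q : P) (hq : ∀ a, q (-a) = - q a) (u v : ℤ) : q * R u v = R (q u) (q v) * q := by
  unfold R
  have : (q u = - q v) ↔ u = -v := by rw [← hq]; exact q.injective.eq_iff
  simp only [this]
  split_ifs
  · exact Equiv.mul_swap_eq_swap_mul _ _ _
  · have h2 : q * Equiv.swap (-u) (-v) = Equiv.swap (-q u) (-q v) * q := by
      rw [← hq, ← hq]; exact Equiv.mul_swap_eq_swap_mul _ _ _
    rw [← mul_assoc, Equiv.mul_swap_eq_swap_mul q, mul_assoc, h2, mul_assoc]

lemma R_s (m : ℕ) (hm : 1 ≤ m) : R m (m + 1) = sgen m := by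
  unfold R; rw [if_neg (by omega)]; rfl

lemma R_s' (m : ℕ) (hm : 1 ≤ m) : R (-(m + 1)) (-m) = sgen m := by
  unfold R; rw [if_neg (by omega)]
  ext a
  simp only [sgen_apply m hm, Equiv.Perm.mul_apply, Equiv.swap_apply_def]
  split_ifs <;> omega

lemma R_t : R (-1) 1 = tgen := by
  unfold R; rw [if_pos rfl, Equiv.swap_comm]; rfl

lemma gen_flip {n : ℕ} {g : P} (h : g ∈ Sset n) (u v : ℤ) (huv : u < v) (hu : u ≠ 0)
    (hv : v ≠ 0) (hg : g v < g u) : g = R u v := by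
  rcases gen_cases h with rfl | ⟨i, h1, h2, rfl⟩
  · have : u = -1 ∧ v = 1 := by
      simp only [tgen_apply] at hg; split_ifs at hg <;> omega
    rw [this.1, this.2, R_t]
  · have : (u = i ∧ v = i + 1) ∨ (u = -(i + 1) ∧ v = -i) := by
      simp only [sgen_apply i h1] at hg; split_ifs at hg <;> omega
    rcases this with ⟨rfl, rfl⟩ | ⟨rfl, rfl⟩
    · rw [R_s i h1]
    · rw [R_s' i h1]

lemma exchange {n : ℕ} {l : List P} (h : IsWord n l) (i j : ℤ) (hij : i < j) (hi : i ≠ 0)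
    (hj : j ≠ 0) (hl : l.prod j < l.prod i) :
    ∃ l2, IsWord n l2 ∧ l2.length + 1 = l.length ∧ l2.prod = l.prod * R i j := by
  induction l with
  | nil => simp at hl; omega
  | cons g l ih =>
    have hw : IsWord n l := fun g hg => h g (List.mem_cons_of_mem _ hg)
    have hg : g ∈ Sset n := h g List.mem_cons_self
    by_cases hc : l.prod j < l.prod i
    · obtain ⟨l2, h1, h2, h3⟩ := ih hw hc
      refine ⟨g :: l2, ?_, by simp [h2], by simp [h3, mul_assoc]⟩
      intro x hx
      rcases List.mem_cons.1 hx with rfl | hx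
      · exact hg
      · exact h1 x hx
    · have h0 : l.prod 0 = 0 := by have := word_odd hw 0; simp at this; omega
      have hne : l.prod i ≠ l.prod j := fun e => by have := l.prod.injective e; omega
      have hi0 : l.prod i ≠ 0 := fun e => hi (l.prod.injective (e.trans h0.symm))
      have hj0 : l.prod j ≠ 0 := fun e => hj (l.prod.injective (e.trans h0.symm))
      have := gen_flip hg (l.prod i) (l.prod j) (by omega) hi0 hj0 (by simpa using hl)
      refine ⟨l, hw, by simp, ?_⟩
      rw [List.prod_cons, mul_assoc, R_conj _ (word_odd hw), ← this, ← mul_assoc, gen_sq hg, one_mul]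

lemma len_le {n : ℕ} {l : List P} (h : IsWord n l) : len n l.prod ≤ l.length :=
  Nat.sInf_le ⟨l, h, rfl, rfl⟩

lemma exists_red {n : ℕ} {l : List P} (h : IsWord n l) :
    ∃ l2, IsWord n l2 ∧ l2.prod = l.prod ∧ l2.length = len n l.prod :=
  Nat.sInf_mem (s := {k | ∃ l2 : List P, (∀ g ∈ l2, g ∈ Sset n) ∧ l2.prod = l.prod ∧ l2.length = k})
    ⟨_, l, h, rfl, rfl⟩

lemma len_descent {n : ℕ} {l : List P} (h : IsWord n l) (i j : ℤ) (hij : i < j) (hi : i ≠ 0)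
    (hj : j ≠ 0) (hl : l.prod j < l.prod i) : len n (l.prod * R i j) < len n l.prod := by
  obtain ⟨l2, a, b, c⟩ := exists_red h
  obtain ⟨l3, a', b', c'⟩ := exchange a i j hij hi hj (by rwa [b])
  have := len_le a'
  rw [c', b] at this
  omega

lemma word_rev {n : ℕ} {l : List P} (h : IsWord n l) :
    IsWord n l.reverse ∧ l.reverse.prod = l.prod⁻¹ := by
  refine ⟨fun g hg => h g (List.mem_reverse.1 hg), ?_⟩
  induction l with
  | nil => simp
  | cons g l ih =>
    rw [List.reverse_cons, List.prod_append, ih (fun g hg => h g (List.mem_cons_of_mem _ hg))]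
    simp [gen_inv (h g List.mem_cons_self)]

lemma len_inv {n : ℕ} {l : List P} (h : IsWord n l) : len n l.prod⁻¹ = len n l.prod := by
  have key : ∀ {l : List P}, IsWord n l → len n l.prod⁻¹ ≤ len n l.prod := by
    intro l h
    obtain ⟨l2, a, b, c⟩ := exists_red h
    have := len_le (word_rev a).1
    rw [(word_rev a).2, b] at this
    simpa [c] using this
  apply le_antisymm (key h)
  have := key (word_rev h).1
  rwa [(word_rev h).2, inv_inv] at this

lemma bruhat_inv {n : ℕ} {x y : P} (h : bruhat n x y) : bruhat n x⁻¹ y⁻¹ := by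
  obtain ⟨l, l', h1, rfl, h3, h4, rfl⟩ := h
  have h1' : IsWord n l' := fun g hg => h1 g (h4.subset hg)
  exact ⟨l.reverse, l'.reverse, (word_rev h1).1, (word_rev h1).2, by
    rw [len_inv h1, List.length_reverse, h3], h4.reverse, (word_rev h1').2⟩

/-- counting function -/
noncomputable def F (n : ℕ) (p : ℤ → Prop) (j : ℤ) : ℕ := ∑ a ∈ Finset.Icc j (n : ℤ), if p a then 1 else 0

lemma F_succ (n : ℕ) (p : ℤ → Prop) (j : ℤ) [Decidable (p j)] (hj : j ≤ n) :
    F n p j = (if p j then 1 else 0) + F n p (j + 1) := by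
  unfold F
  rw [← Finset.insert_Icc_add_one_left_eq_Icc hj, Finset.sum_insert (by simp)]
  congr

lemma F_perm (n : ℕ) (p : ℤ → Prop) (j : ℤ) (e : P)
    (he : ∀ a, (j ≤ e a ∧ e a ≤ n) ↔ (j ≤ a ∧ a ≤ n)) :
    F n (fun a => p (e a)) j = F n p j := by
  unfold F
  exact Finset.sum_equiv e (by intro a; simp [he a]) (by intros; rfl)

lemma F_congr (n : ℕ) (p q : ℤ → Prop) (j : ℤ) (h : ∀ a, j ≤ a → a ≤ n → (p a ↔ q a)) :
    F n p j = F n q j := by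
  unfold F
  apply Finset.sum_congr rfl
  intro a ha
  rw [Finset.mem_Icc] at ha
  simp [h a ha.1 ha.2]

lemma F_s_ne (n i : ℕ) (hi : 1 ≤ i) (hin : i + 1 ≤ n) (p : ℤ → Prop) (j : ℤ) (hj : 1 ≤ j)
    (hne : j ≠ i + 1) : F n (fun a => p (sgen i a)) j = F n p j := by
  apply F_perm n p j (sgen i)
  intro a
  rw [sgen_apply i hi]
  split_ifs <;> omega

lemma F_s_eq (n i : ℕ) (hi : 1 ≤ i) (hin : i + 1 ≤ n) (p : ℤ → Prop)
    [Decidable (p i)] :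
    F n (fun a => p (sgen i a)) (i + 1) = (if p i then 1 else 0) + F n p (i + 2) := by
  have h := F_s_ne n i hi hin p (i + 2) (by omega) (by omega)
  rw [F_succ _ _ _ (by omega)]
  rw [show (i : ℤ) + 1 + 1 = i + 2 by ring, h]
  have : sgen i (i + 1) = i := by rw [sgen_apply i hi]; split_ifs <;> omega
  simp only [this]

noncomputable def N (n : ℕ) (w : P) (j : ℤ) : ℕ := F n (fun a => w a < 0) j

lemma N_s_ne (n i : ℕ) (hi : 1 ≤ i) (hin : i + 1 ≤ n) (w : P) (j : ℤ) (hj : 1 ≤ j)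
    (hne : j ≠ i + 1) : N n (w * sgen i) j = N n w j :=
  F_s_ne n i hi hin (fun a => w a < 0) j hj hne

lemma N_s_eq (n i : ℕ) (hi : 1 ≤ i) (hin : i + 1 ≤ n) (w : P) :
    N n (w * sgen i) (i + 1) = (if w i < 0 then 1 else 0) + N n w (i + 2) :=
  F_s_eq n i hi hin (fun a => w a < 0)

lemma N_t_ne (n : ℕ) (w : P) (j : ℤ) (hj : 2 ≤ j) :
    N n (w * tgen) j = N n w j := by
  apply F_congr
  intro a h1 h2
  rw [Equiv.Perm.mul_apply, tgen_apply, if_neg (by omega), if_neg (by omega)]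

lemma N_t_eq (n : ℕ) (hn : 1 ≤ n) (w : P) :
    N n (w * tgen) 1 = (if w (-1) < 0 then 1 else 0) + N n w 2 := by
  have h := N_t_ne n w 2 (by omega)
  unfold N at *
  rw [F_succ _ _ _ (by omega)]
  rw [show (1 : ℤ) + 1 = 2 by ring, h]
  have : tgen 1 = -1 := by rw [tgen_apply]; simp
  simp only [Equiv.Perm.mul_apply, this]

lemma N_mono_step {n : ℕ} (hn : 1 ≤ n) {l : List P} {g : P} (h : IsWord n (l ++ [g]))
    (hred : (l ++ [g]).length = len n (l ++ [g]).prod) (x : P)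
    (hx : ∀ j, 1 ≤ j → N n x j ≤ N n l.prod j) (j : ℤ) (hj : 1 ≤ j) :
    N n x j ≤ N n (l.prod * g) j ∧ N n (x * g) j ≤ N n (l.prod * g) j := by
  have hw : IsWord n l := fun g hg => h g (by simp [hg])
  have hg : g ∈ Sset n := h g (by simp)
  have hlen := len_le hw
  simp only [List.length_append, List.length_singleton, List.prod_append, List.prod_singleton]
    at hred
  have h00 : l.prod 0 = 0 := by have := word_odd hw 0; simp at this; omega
  set y := l.prod with hy
  rcases gen_cases hg with rfl | ⟨i, h1, h2, rfl⟩
  · by_cases hj2 : 2 ≤ j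
    · rw [N_t_ne n _ j hj2, N_t_ne n _ j hj2]
      exact ⟨hx j hj, hx j hj⟩
    · obtain rfl : j = 1 := by omega
      have hpos : y (-1) < 0 := by
        by_contra hc
        have h3 : y (-1) ≠ 0 := fun e => by
          have := y.injective (e.trans h00.symm); omega
        have h4 := word_odd hw 1
        rw [← hy] at h4
        have := len_descent hw (-1) 1 (by omega) (by omega) (by omega) (by rw [← hy]; omega)
        rw [R_t, ← hy] at this
        omega
      have h5 := hx 2 (by omega)
      have h6 : N n x 1 ≤ 1 + N n x 2 := by
        unfold N; rw [F_succ _ _ _ (by omega)]; split_ifs <;> simp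
      rw [N_t_eq n hn, N_t_eq n hn, if_pos hpos]
      split_ifs <;> omega
  · by_cases hji : j = i + 1
    · subst hji
      have hasc : y i < y (i + 1) := by
        by_contra hc
        have hne : y i ≠ y (i + 1) := fun e => by have := y.injective e; omega
        have := len_descent hw i (i + 1) (by omega) (by omega) (by omega) (by rw [← hy]; omega)
        rw [R_s i h1, ← hy] at this
        omega
      have e1 : ∀ w : P, N n w i = (if w i < 0 then 1 else 0) + N n w (i + 1) := by
        intro w; exact F_succ n (fun a => w a < 0) i (by omega)
      have e2 : ∀ w : P, N n w (i + 1) = (if w (i + 1) < 0 then 1 else 0) + N n w (i + 2) := by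
        intro w
        rw [show (i : ℤ) + 2 = i + 1 + 1 by ring]
        exact F_succ n (fun a => w a < 0) (i + 1) (by omega)
      have a1 := hx i (by omega)
      have a2 := hx (i + 1) (by omega)
      have a3 := hx (i + 2) (by omega)
      rw [N_s_eq n i h1 h2, N_s_eq n i h1 h2]
      have b1 := e1 x
      have b2 := e2 x
      have b3 := e1 y
      have b4 := e2 y
      split_ifs at * <;> omega
    · rw [N_s_ne n i h1 h2 _ j hj hji, N_s_ne n i h1 h2 _ j hj hji]
      exact ⟨hx j hj, hx j hj⟩

lemma N_mono_list {n : ℕ} (hn : 1 ≤ n) (l : List P) : ∀ l' : List P, IsWord n l →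
    l.length = len n l.prod → List.Sublist l' l →
    ∀ j : ℤ, 1 ≤ j → N n l'.prod j ≤ N n l.prod j := by
  induction l using List.reverseRecOn with
  | nil => intro l' _ _ h j _; rw [List.sublist_nil.1 h]
  | append_singleton l g ih =>
    intro l' hw hred hs j hj
    have hw' : IsWord n l := fun g hg => hw g (by simp [hg])
    have hg : g ∈ Sset n := hw g (by simp)
    have hred' : l.length = len n l.prod := by
      apply le_antisymm _ (len_le hw')
      obtain ⟨l2, a, b, c⟩ := exists_red hw'
      have hw2 : IsWord n (l2 ++ [g]) := by
        intro z hz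
        rcases List.mem_append.1 hz with hz | hz
        · exact a z hz
        · rw [List.mem_singleton.1 hz]; exact hg
      have := len_le hw2
      rw [List.prod_append, b, ← List.prod_append, ← hred] at this
      simp at this
      omega
    obtain ⟨l1, l2, rfl, h1, h2⟩ := List.sublist_append_iff.1 hs
    have key := N_mono_step hn hw hred l1.prod (ih l1 hw' hred' h1) j hj
    rw [List.prod_append, List.prod_append, List.prod_singleton]
    rcases l2 with _ | ⟨c, l3⟩
    · simpa using key.1
    · have hc : c :: l3 = [g] := by
        have h3 := h2.length_le
        apply h2.eq_of_length
        simp at h3 ⊢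
        exact h3
      rw [hc, List.prod_singleton]
      exact key.2

lemma N_mono {n : ℕ} (hn : 1 ≤ n) {x y : P} (h : bruhat n x y) (j : ℤ) (hj : 1 ≤ j) :
    N n x j ≤ N n y j := by
  obtain ⟨l, l', h1, rfl, h3, h4, rfl⟩ := h
  exact N_mono_list hn l l' h1 h3 h4 j hj

/-! Grassmannian elements -/

structure Grass (n l : ℕ) (b : P) : Prop where
  word : ∃ L, IsWord n L ∧ L.prod = b
  pos : ∀ a : ℤ, 0 < b a ↔ 0 < a
  rng : ∀ a : ℤ, b a ≤ n ↔ a ≤ n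
  inc : ∀ i j : ℤ, 1 ≤ i → i < j → j ≤ n → (i ≤ l ↔ j ≤ l) → b i < b j

lemma Grass.eq {n l : ℕ} (hn : 1 ≤ n) {b c : P} (hb : Grass n l b) (hc : Grass n l c)
    (h : ∀ a : ℤ, 1 ≤ a → a ≤ n → (b⁻¹ a ≤ l ↔ c⁻¹ a ≤ l)) : b = c := by
  have key : ∀ k : ℕ, ∀ i : ℤ, i = k → 1 ≤ i → i ≤ n → b i = c i := by
    intro k
    induction k using Nat.strong_induction_on with
    | _ k ih =>
      intro i hik h1 h2
      have aux : ∀ {b c : P}, Grass n l b → Grass n l c →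
          (∀ a : ℤ, 1 ≤ a → a ≤ n → (b⁻¹ a ≤ l ↔ c⁻¹ a ≤ l)) →
          (∀ m < k, ∀ i : ℤ, i = m → 1 ≤ i → i ≤ n → b i = c i) → ¬ b i < c i := by
        intro b c hb hc h ih hlt
        set m := c⁻¹ (b i) with hm
        have hcm : c m = b i := by simp [hm]
        have p1 : 0 < b i := (hb.pos i).2 (by omega)
        have p2 : b i ≤ n := (hb.rng i).2 (by omega)
        have q1 : 0 < m := (hc.pos m).1 (by omega)
        have q2 : m ≤ n := (hc.rng m).1 (by omega)
        have hh := h (b i) (by omega) p2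
        rw [← hm] at hh
        simp only [inv_app] at hh
        have hmi : m ≠ i := fun e => by rw [e] at hcm; omega
        by_cases hmlt : m < i
        · have := ih m.toNat (by omega) m (by omega) (by omega) q2
          exact hmi (b.injective (this.trans hcm))
        · have := hc.inc i m h1 (by omega) q2 hh
          omega
      have n1 := aux hb hc h ih
      have n2 := aux hc hb (fun a x y => (h a x y).symm)
        (fun m hm i a1 a2 a3 => (ih m hm i a1 a2 a3).symm)
      omega
  obtain ⟨L, hL, rfl⟩ := hb.word
  obtain ⟨M, hM, rfl⟩ := hc.word
  have key2 : ∀ i : ℤ, 0 ≤ i → L.prod i = M.prod i := by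
    intro i hi
    rcases hi.eq_or_lt with rfl | hi
    · have h1 := word_odd hL 0
      have h2 := word_odd hM 0
      simp at h1 h2
      omega
    · by_cases hin : i ≤ n
      · exact key i.toNat i (by omega) (by omega) hin
      · rw [word_fix hn hL i (by omega), word_fix hn hM i (by omega)]
  ext i
  by_cases hi : 0 ≤ i
  · exact key2 i hi
  · have := key2 (-i) (by omega)
    rw [word_odd hL, word_odd hM] at this
    omega

noncomputable def M (n l : ℕ) (b : P) (j : ℤ) : ℕ := F n (fun a => b⁻¹ a ≤ l) j

lemma Grass.M_one {n l : ℕ} {b : P} (hb : Grass n l b) : M n l b 1 = F n (fun a => a ≤ l) 1 := by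
  apply F_perm n (fun a => a ≤ (l : ℤ)) 1 b⁻¹
  intro a
  have h1 := hb.pos (b⁻¹ a)
  have h2 := hb.rng (b⁻¹ a)
  simp only [app_inv] at h1 h2
  omega

lemma bruhat_cons {n : ℕ} {b d s : P} (hs : s ∈ Sset n) (h : bruhat n b d)
    (hlt : len n d < len n (s * d)) : bruhat n b (s * d) := by
  obtain ⟨l, l', h1, h2, h3, h4, h5⟩ := h
  have hw : IsWord n (s :: l) := by
    intro x hx
    rcases List.mem_cons.1 hx with rfl | hx
    · exact hs
    · exact h1 x hx
  have hp : (s :: l).prod = s * d := by rw [List.prod_cons, h2]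
  have := len_le hw
  rw [hp] at this
  refine ⟨s :: l, l', hw, hp, ?_, h4.cons _, h5⟩
  simp only [List.length_cons] at *
  omega

lemma find_p {n l : ℕ} {b c : P} (h1 : M n l b 1 = M n l c 1)
    (hle : ∀ j, 1 ≤ j → M n l b j ≤ M n l c j) (hne : ∃ j, 1 ≤ j ∧ M n l b j < M n l c j) :
    ∃ p : ℤ, 2 ≤ p ∧ p ≤ n ∧ c⁻¹ p ≤ l ∧ ¬ (c⁻¹ (p - 1) ≤ l) ∧ M n l b p < M n l c p := by
  have big : ∀ (w : P) (j : ℤ), (n : ℤ) < j → M n l w j = 0 := by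
    intro w j hj
    unfold M F
    rw [Finset.Icc_eq_empty (by omega)]; rfl
  have hs : ∀ (w : P) (j : ℤ), j ≤ n →
      M n l w j = (if w⁻¹ j ≤ l then 1 else 0) + M n l w (j + 1) :=
    fun w j hj => F_succ n (fun a => w⁻¹ a ≤ l) j hj
  have hlen : ∀ j, M n l b j < M n l c j → j ≤ n := by
    intro j hj
    by_contra hc
    rw [big c j (by omega)] at hj
    omega
  obtain ⟨q, ⟨hq1, hq2⟩, hq3⟩ := Int.exists_least_of_bdd
    (P := fun j => 1 ≤ j ∧ M n l b j < M n l c j) ⟨1, fun z hz => hz.1⟩ hne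
  have hqn := hlen q hq2
  have hq4 : q ≠ 1 := by rintro rfl; omega
  have hq5 : ¬ (c⁻¹ (q - 1) ≤ l) := by
    intro hc
    have e1 := hs b (q - 1) (by omega)
    have e2 := hs c (q - 1) (by omega)
    rw [if_pos hc] at e2
    rw [sub_add_cancel] at e1 e2
    have := hq3 (q - 1)
    have h4 : M n l b (q - 1) < M n l c (q - 1) := by
      split_ifs at e1 <;> omega
    have := this ⟨by omega, h4⟩
    omega
  obtain ⟨p, ⟨hp1, hp2, hp3⟩, hp4⟩ := Int.exists_greatest_of_bdd
    (P := fun j => 2 ≤ j ∧ M n l b j < M n l c j ∧ ¬ (c⁻¹ (j - 1) ≤ l))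
    ⟨n, fun z hz => hlen z hz.2.1⟩ ⟨q, by omega, hq2, hq5⟩
  have hpn := hlen p hp2
  refine ⟨p, hp1, hpn, ?_, hp3, hp2⟩
  by_contra hc
  have e1 := hs b p hpn
  have e2 := hs c p hpn
  rw [if_neg hc] at e2
  have := hp4 (p + 1) ⟨by omega, by split_ifs at e1 <;> omega, by rwa [add_sub_cancel_right]⟩
  omega

lemma Grass.step {n l : ℕ} {c : P} (hc : Grass n l c) (i : ℕ) (hi : 1 ≤ i) (hin : i + 1 ≤ n)
    (h1 : c⁻¹ (i + 1) ≤ l) (h2 : ¬ (c⁻¹ i ≤ l)) : Grass n l (sgen i * c) := by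
  refine ⟨?_, ?_, ?_, ?_⟩
  · obtain ⟨L, hL, rfl⟩ := hc.word
    refine ⟨sgen i :: L, ?_, by simp⟩
    intro x hx
    rcases List.mem_cons.1 hx with rfl | hx
    · exact sgen_mem hi hin
    · exact hL x hx
  · intro a
    rw [← hc.pos a, Equiv.Perm.mul_apply, sgen_apply i hi]
    split_ifs <;> omega
  · intro a
    rw [← hc.rng a, Equiv.Perm.mul_apply, sgen_apply i hi]
    split_ifs <;> omega
  · intro u v hu huv hv hb
    have h3 := hc.inc u v hu huv hv hb
    have h4 := (hc.pos u).2 (by omega)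
    have h5 := (hc.pos v).2 (by omega)
    have h6 : ¬ (c u = i ∧ c v = i + 1) := by
      rintro ⟨e1, e2⟩
      rw [← e1] at h2
      rw [← e2] at h1
      simp only [inv_app] at h1 h2
      omega
    rw [Equiv.Perm.mul_apply, Equiv.Perm.mul_apply, sgen_apply i hi, sgen_apply i hi]
    split_ifs <;> omega

lemma grass_bruhat {n l : ℕ} (hn : 1 ≤ n) : ∀ (k : ℕ) (b c : P), len n c = k → Grass n l b →
    Grass n l c → (∀ j, 1 ≤ j → M n l b j ≤ M n l c j) → bruhat n b c := by
  intro k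
  induction k using Nat.strong_induction_on with
  | _ k ih =>
    intro b c hk hb hc hle
    by_cases hne : ∃ j, 1 ≤ j ∧ M n l b j < M n l c j
    · obtain ⟨p, hp2, hpn, hpc, hpc', hlt⟩ :=
        find_p (hb.M_one.trans hc.M_one.symm) hle hne
      obtain ⟨i, rfl⟩ : ∃ i : ℕ, p = i + 1 := ⟨(p - 1).toNat, by omega⟩
      rw [add_sub_cancel_right] at hpc'
      have hi : 1 ≤ i := by omega
      have hin : i + 1 ≤ n := by omega
      have hd := hc.step i hi hin hpc hpc'
      have hinv : (sgen i)⁻¹ = sgen i := gen_inv (sgen_mem hi hin)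
      have hlen : len n (sgen i * c) < len n c := by
        obtain ⟨L, hL, rfl⟩ := hc.word
        have h3 := len_descent (word_rev hL).1 i (i + 1) (by omega) (by omega) (by omega)
          (by rw [(word_rev hL).2]; omega)
        rw [R_s i hi, (word_rev hL).2, len_inv hL] at h3
        obtain ⟨D, hD, hD'⟩ := hd.word
        rw [← hD', ← len_inv hD, hD', mul_inv_rev, hinv]
        exact h3
      have hcd : sgen i * (sgen i * c) = c := by rw [← mul_assoc, sgen_sq i hi, one_mul]
      have hMd : ∀ j, 1 ≤ j → M n l b j ≤ M n l (sgen i * c) j := by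
        intro j hj
        have e : M n l (sgen i * c) j = F n (fun a => c⁻¹ (sgen i a) ≤ l) j := by
          unfold M
          rw [mul_inv_rev, hinv]; rfl
        rw [e]
        by_cases hji : j = i + 1
        · subst hji
          rw [F_s_eq n i hi hin (fun a => c⁻¹ a ≤ l), if_neg hpc']
          have e2 : M n l c (i + 1) = (if c⁻¹ (i + 1) ≤ l then 1 else 0) + M n l c (i + 1 + 1) :=
            F_succ n (fun a => c⁻¹ a ≤ l) (i + 1) hpn
          rw [if_pos hpc, show (i : ℤ) + 1 + 1 = i + 2 by ring] at e2
          change _ ≤ 0 + M n l c (i + 2)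
          omega
        · rw [F_s_ne n i hi hin (fun a => c⁻¹ a ≤ l) j hj hji]
          exact hle j hj
      have hbd := ih _ (by omega) b (sgen i * c) rfl hb hd hMd
      have := bruhat_cons (sgen_mem hi hin) hbd (by rw [hcd]; exact hlen)
      rwa [hcd] at this
    · have heq : ∀ j, 1 ≤ j → M n l b j = M n l c j := by
        intro j hj
        by_contra h
        exact hne ⟨j, hj, lt_of_le_of_ne (hle j hj) h⟩
      have hbc : b = c := by
        apply hb.eq hn hc
        intro a h1 h2
        have e := heq a h1
        have e' := heq (a + 1) (by omega)
        unfold M at e e'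
        rw [F_succ n (fun a => b⁻¹ a ≤ l) _ h2, F_succ n (fun a => c⁻¹ a ≤ l) _ h2, e'] at e
        split_ifs at e <;> omega
      subst hbc
      obtain ⟨L, hL, rfl⟩ := hb.word
      obtain ⟨l2, a1, a2, a3⟩ := exists_red hL
      exact ⟨l2, l2, a1, a2, a3, List.Sublist.refl _, a2⟩

lemma sym_props {n : ℕ} {b : P} (hb : b ∈ SymN n) :
    (∃ L, IsWord n L ∧ L.prod = b) ∧ (∀ a : ℤ, 0 < b a ↔ 0 < a) ∧
      ∀ a : ℤ, b a ≤ n ↔ a ≤ n := by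
  unfold SymN at hb
  induction hb using Subgroup.closure_induction with
  | mem x hx =>
    obtain ⟨i, ⟨h1, h2⟩, rfl⟩ := hx
    refine ⟨⟨[sgen i], ?_, by simp⟩, ?_, ?_⟩
    · intro g hg
      rw [List.mem_singleton.1 hg]
      exact sgen_mem h1 (by omega)
    · intro a
      rw [sgen_apply i h1]
      split_ifs <;> omega
    · intro a
      rw [sgen_apply i h1]
      split_ifs <;> omega
  | one => exact ⟨⟨[], by intro g hg; simp at hg, rfl⟩, by simp, by simp⟩
  | mul x y _ _ hx hy =>
    obtain ⟨⟨L, hL, rfl⟩, h1, h2⟩ := hx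
    obtain ⟨⟨K, hK, rfl⟩, h3, h4⟩ := hy
    refine ⟨⟨L ++ K, ?_, by simp⟩, ?_, ?_⟩
    · intro g hg
      rcases List.mem_append.1 hg with hg | hg
      · exact hL g hg
      · exact hK g hg
    · intro a; rw [Equiv.Perm.mul_apply, h1, h3]
    · intro a; rw [Equiv.Perm.mul_apply, h2, h4]
  | inv x _ hx =>
    obtain ⟨⟨L, hL, rfl⟩, h1, h2⟩ := hx
    refine ⟨⟨L.reverse, (word_rev hL).1, (word_rev hL).2⟩, ?_, ?_⟩
    · intro a; rw [← h1, app_inv]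
    · intro a; rw [← h2, app_inv]

lemma grass_of_Y {n l : ℕ} {b : P} (hb : b ∈ Yset n l) : Grass n l b := by
  obtain ⟨hS, hmin⟩ := hb
  obtain ⟨hw, hp, hr⟩ := sym_props hS
  have adj : ∀ i : ℕ, 1 ≤ i → i + 1 ≤ n → i ≠ l → b i < b (i + 1) := by
    intro i h1 h2 h3
    by_contra hc
    have hne : b i ≠ b (i + 1) := fun e => by have := b.injective e; omega
    obtain ⟨L, hL, rfl⟩ := hw
    have h4 := len_descent hL i (i + 1) (by omega) (by omega) (by omega) (by omega)
    rw [R_s i h1] at h4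
    have h5 := hmin (sgen i) (Subgroup.subset_closure ⟨i, ⟨h1, by omega, h3⟩, rfl⟩)
    omega
  refine ⟨hw, hp, hr, ?_⟩
  have key : ∀ (k : ℕ) (i j : ℤ), j = i + 1 + k → 1 ≤ i → j ≤ n → (i ≤ l ↔ j ≤ l) → b i < b j := by
    intro k
    induction k with
    | zero =>
      intro i j hj h1 h2 h3
      have := adj i.toNat (by omega) (by omega) (by omega)
      rw [Int.toNat_of_nonneg (by omega)] at this
      rw [hj]; simpa using this
    | succ k ih =>
      intro i j hj h1 h2 h3
      have e1 := ih i (j - 1) (by push_cast at hj; omega) h1 (by omega) (by omega)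
      have := adj (j - 1).toNat (by omega) (by omega) (by omega)
      rw [Int.toNat_of_nonneg (by omega), sub_add_cancel] at this
      omega
  intro i j h1 h2 h3 h4
  exact key (j - i - 1).toNat i j (by omega) h1 h3 h4

lemma Grass.neg {n l : ℕ} {b : P} (hb : Grass n l b) (a : ℤ) : b a < 0 ↔ a < 0 := by
  obtain ⟨L, hL, rfl⟩ := hb.word
  have h1 := hb.pos (-a)
  rw [word_odd hL] at h1
  omega

lemma symLR_props {n l : ℕ} {b : P} (hb : b ∈ SymLR n l) :
    (∀ a : ℤ, 0 < b a ↔ 0 < a) ∧ (∀ a : ℤ, b a < 0 ↔ a < 0) ∧ ∀ a : ℤ, b a ≤ l ↔ a ≤ l := by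
  unfold SymLR at hb
  induction hb using Subgroup.closure_induction with
  | mem x hx =>
    obtain ⟨i, ⟨h1, h2, h3⟩, rfl⟩ := hx
    refine ⟨?_, ?_, ?_⟩ <;>
    · intro a
      rw [sgen_apply i h1]
      split_ifs <;> omega
  | one => simp
  | mul x y _ _ hx hy =>
    obtain ⟨h1, h2, h3⟩ := hx
    obtain ⟨h4, h5, h6⟩ := hy
    refine ⟨?_, ?_, ?_⟩
    · intro a; rw [Equiv.Perm.mul_apply, h1, h4]
    · intro a; rw [Equiv.Perm.mul_apply, h2, h5]
    · intro a; rw [Equiv.Perm.mul_apply, h3, h6]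
  | inv x _ hx =>
    obtain ⟨h1, h2, h3⟩ := hx
    refine ⟨?_, ?_, ?_⟩
    · intro a; rw [← h1, app_inv]
    · intro a; rw [← h2, app_inv]
    · intro a; rw [← h3, app_inv]

lemma rgen_apply (k : ℕ) : ∀ a : ℤ, 1 ≤ a →
    rgen (k + 1) a = if a = 1 then -((k : ℤ) + 1) else if a ≤ k + 1 then a - 1 else a := by
  induction k with
  | zero =>
    intro a ha
    rw [rgen, tgen_apply]
    split_ifs <;> simp at * <;> omega
  | succ k ih =>
    intro a ha
    rw [rgen, Equiv.Perm.mul_apply, ih a ha, sgen_apply (k + 1) (by omega)]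
    push_cast
    split_ifs <;> omega

lemma al_succ (l : ℕ) : al (l + 1) = al l * rgen (l + 1) := by
  unfold al
  rw [List.range_succ, List.map_append, List.prod_append]
  simp

lemma rgen_odd (k : ℕ) : ∀ a : ℤ, rgen (k + 1) (-a) = - rgen (k + 1) a := by
  induction k with
  | zero => intro a; rw [rgen, tgen_apply, tgen_apply]; split_ifs <;> omega
  | succ k ih =>
    intro a
    rw [rgen, Equiv.Perm.mul_apply, Equiv.Perm.mul_apply, ih]
    exact gen_odd (n := k + 2) (sgen_mem (by omega) (by omega)) _

lemma al_odd (l : ℕ) : ∀ a : ℤ, al l (-a) = - al l a := by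
  induction l with
  | zero => intro a; simp [al]
  | succ l ih =>
    intro a
    rw [al_succ, Equiv.Perm.mul_apply, Equiv.Perm.mul_apply, rgen_odd, ih]

lemma al_apply (l : ℕ) : ∀ a : ℤ, 1 ≤ a → al l a = if a ≤ l then a - (l + 1) else a := by
  induction l with
  | zero => intro a ha; simp [al]; omega
  | succ l ih =>
    intro a ha
    rw [al_succ, Equiv.Perm.mul_apply, rgen_apply l a ha]
    by_cases h1 : a = 1
    · rw [if_pos h1, al_odd, ih _ (by omega)]
      push_cast
      split_ifs <;> omega
    · rw [if_neg h1]
      by_cases h2 : a ≤ l + 1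
      · rw [if_pos h2, ih _ (by omega)]
        push_cast
        split_ifs <;> omega
      · rw [if_neg h2, ih _ (by omega)]
        push_cast
        split_ifs <;> omega

lemma al_neg (l : ℕ) (q : ℤ) (hq : 1 ≤ q) : al l q < 0 ↔ q ≤ l := by
  rw [al_apply l q hq]; split_ifs <;> omega

lemma al_inv_neg (l : ℕ) (q : ℤ) (hq : 1 ≤ q) : (al l)⁻¹ q < 0 ↔ q ≤ l := by
  have : (al l)⁻¹ q = al l q := by
    rw [Equiv.Perm.inv_eq_iff_eq, al_apply l q hq]
    split_ifs with h
    · rw [show q - ((l : ℤ) + 1) = -(l + 1 - q) by ring, al_odd, al_apply l _ (by omega)]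
      split_ifs <;> omega
    · rw [al_apply l q hq, if_neg h]
  rw [this, al_neg l q hq]

lemma N_eq_M {n l : ℕ} {u c b : P} (hu : Grass n l u) (hb : Grass n l b)
    (hc : ∀ q, 1 ≤ q → (c q < 0 ↔ q ≤ l)) (j : ℤ) (hj : 1 ≤ j) :
    N n (u * c * b⁻¹) j = M n l b j := by
  apply F_congr
  intro a h1 h2
  rw [Equiv.Perm.mul_apply, Equiv.Perm.mul_apply, hu.neg]
  apply hc
  have := hb.pos (b⁻¹ a)
  rw [app_inv] at this
  omega

lemma decomp_N {n l : ℕ} {w a σ b : P} (h : IsDecomp n l w a σ b) :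
    Grass n l a ∧ Grass n l b ∧ (∀ j, 1 ≤ j → N n w j = M n l b j) ∧
      (∀ j, 1 ≤ j → N n w⁻¹ j = M n l a j) := by
  obtain ⟨ha, hb, hs, rfl, -⟩ := h
  have ha := grass_of_Y ha
  have hb := grass_of_Y hb
  refine ⟨ha, hb, ?_, ?_⟩
  · intro j hj
    rw [mul_assoc a]
    apply N_eq_M ha hb _ j hj
    intro q hq
    obtain ⟨h1, h2, h3⟩ := symLR_props hs
    have := (h1 q).2 (by omega)
    rw [Equiv.Perm.mul_apply, al_neg _ _ (by omega), h3]
  · intro j hj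
    have e : (a * al l * σ * b⁻¹)⁻¹ = b * (σ⁻¹ * (al l)⁻¹) * a⁻¹ := by group
    rw [e]
    apply N_eq_M hb ha _ j hj
    intro q hq
    obtain ⟨h1, h2, h3⟩ := symLR_props (inv_mem hs)
    rw [Equiv.Perm.mul_apply, h2, al_inv_neg _ _ hq]

end DB

/-- If `ℓ_t(x) = ℓ_t(y) = l` and `x ≤ y` (Bruhat), then
`a_x ≤ a_y` and `b_x ≤ b_y` for the canonical decompositions. -/
theorem decomp_bruhat_mono (n l : ℕ) (hn : 1 ≤ n) (x y : P)
    (hx : x ∈ Wset n) (hy : y ∈ Wset n)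
    (htx : tlen n x = l) (hty : tlen n y = l) (hxy : bruhat n x y)
    (ax σx bx ay σy by' : P)
    (hdx : IsDecomp n l x ax σx bx) (hdy : IsDecomp n l y ay σy by') :
    bruhat n ax ay ∧ bruhat n bx by' := by
  obtain ⟨hax, hbx, hNx, hNx'⟩ := DB.decomp_N hdx
  obtain ⟨hay, hby, hNy, hNy'⟩ := DB.decomp_N hdy
  constructor
  · apply DB.grass_bruhat hn _ ax ay rfl hax hay
    intro j hj
    rw [← hNx' j hj, ← hNy' j hj]
    exact DB.N_mono hn (DB.bruhat_inv hxy) j hj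
  · apply DB.grass_bruhat hn _ bx by' rfl hbx hby
    intro j hj
    rw [← hNx j hj, ← hNy j hj]
    exact DB.N_mono hn hxy j hj
end

section
/- Assume n ≥ 2 and let w ∈ W_n satisfy: (1) w s_i > w for every 1 ≤ i ≤ n−1; (2) s_i w > w for every 2 ≤ i ≤ n−1; (3) tw > w; (4) w does not lie in the parabolic subgroup W_{n−1} = ⟨t, s_1, …, s_{n−2}⟩. Then w = r_2 r_3 ⋯ r_n. -/
open scoped Classical

theorem sgen_apply (i : ℕ) (hi : 1 ≤ i) (x : ℤ) :
    sgen i x = if x = i then (i : ℤ) + 1 else if x = i + 1 then (i : ℤ)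
      else if x = -i then -((i : ℤ) + 1) else if x = -((i : ℤ) + 1) then -(i : ℤ) else x := by
  simp only [sgen, Equiv.Perm.mul_apply, Equiv.swap_apply_def]
  split_ifs <;> omega

theorem tgen_apply (x : ℤ) : tgen x = if x = 1 then -1 else if x = -1 then 1 else x := by
  simp only [tgen, Equiv.swap_apply_def]

theorem sgen_odd (i : ℕ) (hi : 1 ≤ i) (x : ℤ) : sgen i (-x) = - sgen i x := by
  rw [sgen_apply i hi, sgen_apply i hi]; split_ifs <;> omega

theorem tgen_odd (x : ℤ) : tgen (-x) = - tgen x := by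
  rw [tgen_apply, tgen_apply]; split_ifs <;> omega

theorem gen_sq (n : ℕ) (g : P) (hg : g ∈ Sset n) : g * g = 1 := by
  rcases hg with rfl | ⟨i, hi, rfl⟩
  · exact tgen_sq
  · exact sgen_sq i hi.1

theorem gen_odd (n : ℕ) (g : P) (hg : g ∈ Sset n) (x : ℤ) : g (-x) = - g x := by
  rcases hg with rfl | ⟨i, hi, rfl⟩
  · exact tgen_odd x
  · exact sgen_odd i hi.1 x

theorem prod_odd (n : ℕ) (l : List P) (hl : ∀ g ∈ l, g ∈ Sset n) (x : ℤ) :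
    l.prod (-x) = - l.prod x := by
  induction l with
  | nil => simp
  | cons g l ih =>
    rw [List.prod_cons, Equiv.Perm.mul_apply, Equiv.Perm.mul_apply,
      ih (fun g hg => hl g (List.mem_cons_of_mem _ hg)), gen_odd n g (hl g List.mem_cons_self)]

/-- conjugation of `s_i` to `s_a` by an odd permutation -/
theorem conj_s (u : P) (hu : ∀ x, u (-x) = - u x) (i a : ℕ) (ha : 1 ≤ a)
    (h : (u i = a ∧ u (i + 1) = a + 1) ∨ (u i = -(a + 1) ∧ u (i + 1) = -a)) :
    u * sgen i = sgen a * u := by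
  have h3 : u (-(i : ℤ)) = - u i := hu _
  have h4 : u (-((i : ℤ) + 1)) = - u (i + 1) := hu _
  unfold sgen
  rw [← mul_assoc, Equiv.mul_swap_eq_swap_mul u, mul_assoc, Equiv.mul_swap_eq_swap_mul u, h3, h4,
    ← mul_assoc]
  rcases h with ⟨h, h'⟩ | ⟨h, h'⟩
  · rw [h, h']
  · rw [h, h', neg_neg, neg_neg]
    refine congrArg (· * u) ?_
    ext x
    simp only [Equiv.Perm.mul_apply, Equiv.swap_apply_def]
    split_ifs <;> omega

theorem conj_t (u : P) (hu : ∀ x, u (-x) = - u x) (h : u 1 = 1) :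
    u * tgen = tgen * u := by
  have h3 : u (-1) = - u 1 := hu _
  unfold tgen
  rw [Equiv.mul_swap_eq_swap_mul, h3, h]

theorem delete_s (n : ℕ) (i : ℕ) (hi : 1 ≤ i) (l : List P) (hl : ∀ g ∈ l, g ∈ Sset n)
    (h : l.prod (i + 1) < l.prod i) :
    ∃ l' : List P, (∀ g ∈ l', g ∈ Sset n) ∧ l'.prod = l.prod * sgen i ∧
      l'.length < l.length := by
  induction l with
  | nil => simp at h
  | cons g l ih =>
    have hl' : ∀ g ∈ l, g ∈ Sset n := fun g hg => hl g (List.mem_cons_of_mem _ hg)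
    have hg := hl g List.mem_cons_self
    by_cases hc : l.prod (i + 1) < l.prod i
    · obtain ⟨l', h1, h2, h3⟩ := ih hl' hc
      refine ⟨g :: l', ?_, ?_, ?_⟩
      · intro x hx
        rcases List.mem_cons.1 hx with rfl | hx
        · exact hg
        · exact h1 x hx
      · rw [List.prod_cons, List.prod_cons, h2, mul_assoc]
      · simpa using h3
    · refine ⟨l, hl', ?_, by simp⟩
      have hodd := prod_odd n l hl'
      generalize hu : l.prod = u at *
      have hsq := gen_sq n g hg
      have hne : u (i + 1) ≠ u i := fun hh => by
        have := u.injective hh; omega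
      have hne2 : u (i + 1) ≠ - u i := fun hh => by
        rw [← hodd] at hh; have := u.injective hh; omega
      have u0 : u 0 = 0 := by have := hodd 0; simp at this; omega
      have z1 : u i ≠ 0 := fun hh => by
        have := u.injective (hh.trans u0.symm); omega
      have z2 : u (i + 1) ≠ 0 := fun hh => by
        have := u.injective (hh.trans u0.symm); omega
      rw [List.prod_cons, hu, Equiv.Perm.mul_apply, Equiv.Perm.mul_apply] at h
      rw [List.prod_cons, hu, mul_assoc]
      rcases hg with rfl | ⟨a, ha, rfl⟩
      · exfalso
        rw [tgen_apply, tgen_apply] at h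
        split_ifs at h <;> omega
      · rw [conj_s u hodd i a ha.1, ← mul_assoc, hsq, one_mul]
        rw [sgen_apply a ha.1, sgen_apply a ha.1] at h
        have := ha.1
        split_ifs at h <;> omega

theorem delete_t (n : ℕ) (l : List P) (hl : ∀ g ∈ l, g ∈ Sset n)
    (h : l.prod 1 < 0) :
    ∃ l' : List P, (∀ g ∈ l', g ∈ Sset n) ∧ l'.prod = l.prod * tgen ∧
      l'.length < l.length := by
  induction l with
  | nil => simp at h
  | cons g l ih =>
    have hl' : ∀ g ∈ l, g ∈ Sset n := fun g hg => hl g (List.mem_cons_of_mem _ hg)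
    have hg := hl g List.mem_cons_self
    by_cases hc : l.prod 1 < 0
    · obtain ⟨l', h1, h2, h3⟩ := ih hl' hc
      refine ⟨g :: l', ?_, ?_, ?_⟩
      · intro x hx
        rcases List.mem_cons.1 hx with rfl | hx
        · exact hg
        · exact h1 x hx
      · rw [List.prod_cons, List.prod_cons, h2, mul_assoc]
      · simpa using h3
    · refine ⟨l, hl', ?_, by simp⟩
      have hodd := prod_odd n l hl'
      generalize hu : l.prod = u at *
      have hsq := gen_sq n g hg
      rw [List.prod_cons, hu, Equiv.Perm.mul_apply] at h
      rw [List.prod_cons, hu, mul_assoc]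
      rcases hg with rfl | ⟨a, ha, rfl⟩
      · rw [conj_t u hodd, ← mul_assoc, hsq, one_mul]
        rw [tgen_apply] at h
        split_ifs at h <;> omega
      · exfalso
        rw [sgen_apply a ha.1] at h
        have := ha.1
        split_ifs at h <;> omega

theorem len_le_s15 (n : ℕ) (l : List P) (hl : ∀ g ∈ l, g ∈ Sset n) : len n l.prod ≤ l.length :=
  Nat.sInf_le ⟨l, hl, rfl, rfl⟩

theorem len_attained (n : ℕ) (w : P) (hw : ∃ l : List P, (∀ g ∈ l, g ∈ Sset n) ∧ l.prod = w) :
    ∃ l : List P, (∀ g ∈ l, g ∈ Sset n) ∧ l.prod = w ∧ l.length = len n w := by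
  obtain ⟨l, h1, h2⟩ := hw
  exact Nat.sInf_mem (s := {k | ∃ l : List P, (∀ g ∈ l, g ∈ Sset n) ∧ l.prod = w ∧ l.length = k})
    ⟨_, l, h1, h2, rfl⟩

theorem len_pos_word (n : ℕ) (w : P) (hw : 0 < len n w) :
    ∃ l : List P, (∀ g ∈ l, g ∈ Sset n) ∧ l.prod = w := by
  obtain ⟨k, l, h1, h2, -⟩ := Nat.nonempty_of_pos_sInf hw
  exact ⟨l, h1, h2⟩

theorem prod_reverse (n : ℕ) (l : List P) (hl : ∀ g ∈ l, g ∈ Sset n) :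
    l.reverse.prod = l.prod⁻¹ := by
  induction l with
  | nil => simp
  | cons g l ih =>
    have := gen_sq n g (hl g List.mem_cons_self)
    rw [List.reverse_cons, List.prod_append, ih (fun g hg => hl g (List.mem_cons_of_mem _ hg)),
      List.prod_singleton, List.prod_cons, mul_inv_rev, ← eq_inv_of_mul_eq_one_left this]

theorem right_asc (n : ℕ) (w : P) (hw : ∃ l : List P, (∀ g ∈ l, g ∈ Sset n) ∧ l.prod = w)
    (i : ℕ) (hi : 1 ≤ i) (h : len n w < len n (w * sgen i)) : w i < w (i + 1) := by
  obtain ⟨l, h1, h2, h3⟩ := len_attained n w hw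
  by_contra hc
  have hne : w (i + 1) ≠ w i := fun hh => by have := w.injective hh; omega
  obtain ⟨l', h4, h5, h6⟩ := delete_s n i hi l h1 (by rw [h2]; omega)
  have := len_le_s15 n l' h4
  rw [h5, h2] at this
  omega

theorem left_asc (n : ℕ) (w : P) (hw : ∃ l : List P, (∀ g ∈ l, g ∈ Sset n) ∧ l.prod = w)
    (i : ℕ) (hi : i ∈ Set.Icc 1 (n - 1)) (h : len n w < len n (sgen i * w)) :
    w⁻¹ i < w⁻¹ (i + 1) := by
  obtain ⟨l, h1, h2, h3⟩ := len_attained n w hw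
  by_contra hc
  have hne : w⁻¹ (i + 1) ≠ w⁻¹ i := fun hh => by have := w⁻¹.injective hh; omega
  have hr := prod_reverse n l h1
  obtain ⟨l', h4, h5, h6⟩ := delete_s n i hi.1 l.reverse (by simpa using h1)
    (by rw [hr, h2]; omega)
  have := len_le_s15 n l'.reverse (by simpa using h4)
  rw [prod_reverse n l' h4, h5, hr, h2, mul_inv_rev, inv_inv,
    ← eq_inv_of_mul_eq_one_left (sgen_sq i hi.1)] at this
  simp at this h6
  omega

theorem left_t (n : ℕ) (w : P) (hw : ∃ l : List P, (∀ g ∈ l, g ∈ Sset n) ∧ l.prod = w)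
    (h : len n w < len n (tgen * w)) : 0 ≤ w⁻¹ 1 := by
  obtain ⟨l, h1, h2, h3⟩ := len_attained n w hw
  by_contra hc
  have hr := prod_reverse n l h1
  obtain ⟨l', h4, h5, h6⟩ := delete_t n l.reverse (by simpa using h1)
    (by rw [hr, h2]; omega)
  have := len_le_s15 n l'.reverse (by simpa using h4)
  rw [prod_reverse n l' h4, h5, hr, h2, mul_inv_rev, inv_inv,
    ← eq_inv_of_mul_eq_one_left tgen_sq] at this
  simp at this h6
  omega

theorem rgen_odd (n : ℕ) (x : ℤ) : rgen (n + 1) (-x) = - rgen (n + 1) x := by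
  induction n generalizing x with
  | zero => exact tgen_odd x
  | succ n ih => 
    simp only [rgen, Equiv.Perm.mul_apply] at *
    rw [ih, sgen_odd _ (by omega)]

theorem rgen_apply (n : ℕ) (x : ℤ) (hx : 0 ≤ x) : rgen (n + 1) x =
    if x = 0 then 0 else if x = 1 then -((n : ℤ) + 1) else if x ≤ n + 1 then x - 1 else x := by
  induction n with
  | zero =>
    simp only [rgen, tgen_apply]
    push_cast
    split_ifs <;> omega
  | succ n ih => 
    simp only [rgen, Equiv.Perm.mul_apply] at *
    rw [ih, sgen_apply _ (by omega)]
    push_cast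
    split_ifs <;> omega

/-- `bel k = r_2 ⋯ r_{k+1}` -/
def bel (k : ℕ) : P := ((List.range k).map (fun k => rgen (k + 2))).prod

theorem bel_succ (k : ℕ) : bel (k + 1) = bel k * rgen (k + 2) := by
  simp [bel, List.range_succ]

theorem bel_odd (k : ℕ) (x : ℤ) : bel k (-x) = - bel k x := by
  induction k generalizing x with
  | zero => simp [bel]
  | succ k ih => rw [bel_succ, Equiv.Perm.mul_apply, rgen_odd, ih, Equiv.Perm.mul_apply]

theorem bel_apply (k : ℕ) (x : ℤ) (hx : 0 ≤ x) : bel k x =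
    if x = 0 then 0 else if x ≤ k then x - k - 2 else if x = k + 1 then 1 else x := by
  induction k generalizing x with
  | zero => simp [bel]; split_ifs <;> omega
  | succ k ih =>
    rw [bel_succ, Equiv.Perm.mul_apply, rgen_apply _ x hx]
    push_cast
    by_cases h1 : x = 1
    · subst h1
      rw [if_neg (by omega), if_pos rfl, bel_odd, ih _ (by omega)]
      split_ifs <;> omega
    · rw [ih _ (by split_ifs <;> omega)]
      split_ifs <;> omega

theorem rgen_mem (n k : ℕ) (hk : k + 2 ≤ n) :
    rgen (k + 1) ∈ Subgroup.closure (insert tgen (sgen '' Set.Icc 1 (n - 2))) := by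
  induction k with
  | zero => exact Subgroup.subset_closure (Set.mem_insert _ _)
  | succ k ih =>
    simp only [rgen]
    refine mul_mem (Subgroup.subset_closure ?_) (ih (by omega))
    exact Set.mem_insert_of_mem _ ⟨k + 1, ⟨by omega, by omega⟩, rfl⟩

theorem bel_mem (n k : ℕ) (hk : k + 2 ≤ n) :
    bel k ∈ Subgroup.closure (insert tgen (sgen '' Set.Icc 1 (n - 2))) := by
  induction k with
  | zero => simp [bel, one_mem]
  | succ k ih =>
    rw [bel_succ]
    exact mul_mem (ih (by omega)) (rgen_mem n (k + 1) (by omega))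

theorem ext_odd (u w : P) (hu : ∀ x, u (-x) = - u x) (hw : ∀ x, w (-x) = - w x)
    (h : ∀ x, 0 ≤ x → u x = w x) : u = w := by
  ext x
  rcases le_total 0 x with hx | hx
  · exact h x hx
  · have := h (-x) (by omega)
    rw [hu, hw] at this
    omega

theorem classify (n : ℕ) (w : P) (hw : w ∈ Wset (n + 1))
    (h1 : ∀ i : ℕ, 1 ≤ i → i ≤ n → w i < w (i + 1))
    (h2 : ∀ i : ℕ, 2 ≤ i → i ≤ n → w⁻¹ i < w⁻¹ (i + 1))
    (h3 : 0 ≤ w⁻¹ 1) : ∃ k ≤ n, w = bel k := by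
  have hodd := hw.1
  have hw0 : w 0 = 0 := by have := hodd 0; simp at this; omega
  have wv : ∀ x, w (w⁻¹ x) = x := fun x => by simp
  have vw : ∀ x, w⁻¹ (w x) = x := fun x => by simp
  have vodd : ∀ x, w⁻¹ (-x) = - w⁻¹ x := fun x => by
    apply w.injective; rw [wv, hodd, wv]
  have vbd : ∀ x : ℤ, |x| ≤ n + 1 → |w⁻¹ x| ≤ n + 1 := fun x hx => by
    by_contra hc
    have := hw.2 (w⁻¹ x) (by push_cast; omega)
    rw [wv] at this
    rw [← this] at hc; exact hc hx
  have wbd : ∀ x : ℤ, |x| ≤ n + 1 → |w x| ≤ n + 1 := fun x hx => by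
    by_contra hc
    have := hw.2 (w x) (by push_cast; omega)
    have := w.injective this
    rw [this] at hc; exact hc hx
  have wmono : ∀ a b : ℕ, 1 ≤ a → a + b ≤ n + 1 → w a + b ≤ w (a + b) := by
    intro a b ha
    induction b with
    | zero => simp
    | succ b ih =>
      intro hb
      have := ih (by omega)
      have h := h1 (a + b) (by omega) (by omega)
      push_cast at h ⊢
      rw [← add_assoc (a : ℤ)]; omega
  have vmono : ∀ a b : ℕ, 2 ≤ a → a + b ≤ n + 1 → w⁻¹ a + b ≤ w⁻¹ (a + b) := by
    intro a b ha
    induction b with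
    | zero => simp
    | succ b ih =>
      intro hb
      have := ih (by omega)
      have h := h2 (a + b) (by omega) (by omega)
      push_cast at h ⊢
      rw [← add_assoc (a : ℤ)]; omega
  have wmono' : ∀ a b : ℤ, 1 ≤ a → a ≤ b → b ≤ n + 1 → w a + (b - a) ≤ w b := by
    intro a b ha hab hb
    have := wmono a.toNat (b - a).toNat (by omega) (by omega)
    rw [Int.toNat_of_nonneg (by omega), Int.toNat_of_nonneg (by omega)] at this
    simpa using this
  have vmono' : ∀ a b : ℤ, 2 ≤ a → a ≤ b → b ≤ n + 1 → w⁻¹ a + (b - a) ≤ w⁻¹ b := by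
    intro a b ha hab hb
    have := vmono a.toNat (b - a).toNat (by omega) (by omega)
    rw [Int.toNat_of_nonneg (by omega), Int.toNat_of_nonneg (by omega)] at this
    simpa using this
  have v1 : w⁻¹ 1 ≠ 0 := fun hh => by
    have := wv 1; rw [hh, hw0] at this; omega
  by_cases hn : w (n + 1) = n + 1
  · cases n with
    | zero =>
      refine ⟨0, le_rfl, ext_odd _ _ hodd (bel_odd 0) fun x hx => ?_⟩
      simp only [bel, List.range_zero, List.map_nil, List.prod_nil, Equiv.Perm.one_apply]
      rcases (by omega : x = 0 ∨ x = 1 ∨ 1 < x) with rfl | rfl | h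
      · exact hw0
      · simpa using hn
      · exact hw.2 x (by simp; rw [abs_of_nonneg hx]; omega)
    | succ n =>
      obtain ⟨k, hk, he⟩ := classify n w ⟨hodd, fun x hx => by
          rcases (by rcases abs_cases x with ⟨e, _⟩ | ⟨e, _⟩ <;> rw [e] at hx ⊢ <;> push_cast at * <;> omega :
            (((n + 1 + 1 : ℕ) : ℤ) < |x|) ∨ x = n + 1 + 1 ∨ x = -(n + 1 + 1)) with h | h | h
          · exact hw.2 x h
          · subst h; simpa using hn
          · subst h; rw [hodd]; push_cast at hn; rw [hn]⟩
        (fun i a b => h1 i a (by omega)) (fun i a b => h2 i a (by omega)) h3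
      exact ⟨k, by omega, he⟩
  · have b1 := vbd (n + 1) (by rw [abs_of_nonneg] <;> omega)
    have b2 := wbd (n + 1) (by rw [abs_of_nonneg] <;> omega)
    rw [abs_le] at b1 b2
    have vn0 : w⁻¹ (n + 1) ≠ 0 := fun hh => by
      have := wv (n + 1); rw [hh, hw0] at this; omega
    have vneg : w⁻¹ (n + 1) < 0 := by
      by_contra hc
      have := wmono' (w⁻¹ (n + 1)) (n + 1) (by omega) (by omega) le_rfl
      rw [wv] at this
      omega
    have hnpos : 1 ≤ n := by
      rcases Nat.eq_zero_or_pos n with rfl | h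
      · simp only [Nat.cast_zero, zero_add] at vneg; omega
      · exact h
    -- `v(1) = n + 1`
    have c1 := vbd 1 (by simp)
    rw [abs_le] at c1
    have v1n : w⁻¹ 1 = n + 1 := by
      by_contra hc
      have h := wmono' (w⁻¹ 1) (w⁻¹ 1 + 1) (by omega) (by omega) (by omega)
      rw [wv] at h
      have b := wbd (w⁻¹ 1 + 1) (by rw [abs_le]; omega)
      rw [abs_le] at b
      have := vmono' (w (w⁻¹ 1 + 1)) (n + 1) (by omega) (by omega) le_rfl
      rw [vw] at this
      omega
    have vk : ∀ k : ℤ, 2 ≤ k → k ≤ n + 1 → w⁻¹ k = k - n - 2 := by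
      intro k hk hk'
      have a1 := vmono' k (n + 1) hk hk' le_rfl
      have a2 := vmono' 2 k le_rfl hk hk'
      have b := vbd 2 (by rw [abs_le]; omega)
      rw [abs_le] at b
      have : w⁻¹ 2 ≠ -(n + 1) := fun hh => by
        rw [← v1n, ← vodd] at hh
        have := w⁻¹.injective hh
        omega
      omega
    refine ⟨n, le_rfl, ext_odd _ _ hodd (bel_odd n) fun x hx => ?_⟩
    rw [bel_apply n x hx]
    split_ifs with q1 q2 q3
    · rw [q1, hw0]
    · have := vk (n + 2 - x) (by omega) (by omega)
      have h := wv (n + 2 - x)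
      rw [this, show (n : ℤ) + 2 - x - n - 2 = -x by ring, hodd] at h
      omega
    · rw [q3, ← v1n, wv]
    · exact hw.2 x (by rw [abs_of_nonneg hx]; push_cast; omega)

/-- If `n ≥ 2` and `w ∈ W_n` satisfies `w s_i > w` for all
`1 ≤ i ≤ n-1`, `s_i w > w` for all `2 ≤ i ≤ n-1`, `t w > w`, and `w ∉ W_{n-1}`,
then `w = r_2 r_3 ⋯ r_n`. -/
theorem bigrassmannian_lemma (n : ℕ) (hn : 2 ≤ n) (w : P) (hw : w ∈ Wset n)
    (h1 : ∀ i ∈ Set.Icc 1 (n - 1), len n w < len n (w * sgen i))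
    (h2 : ∀ i ∈ Set.Icc 2 (n - 1), len n w < len n (sgen i * w))
    (h3 : len n w < len n (tgen * w))
    (h4 : w ∉ Subgroup.closure (insert tgen (sgen '' Set.Icc 1 (n - 2)))) :
    w = ((List.range (n - 1)).map (fun k => rgen (k + 2))).prod := by
  obtain ⟨n, rfl⟩ : ∃ m, n = m + 1 := ⟨n - 1, by omega⟩
  have hword : ∃ l : List P, (∀ g ∈ l, g ∈ Sset (n + 1)) ∧ l.prod = w := by
    obtain ⟨l, ha, hb⟩ := len_pos_word (n + 1) _ (Nat.zero_lt_of_lt h3)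
    refine ⟨tgen :: l, ?_, ?_⟩
    · intro x hx
      rcases List.mem_cons.1 hx with rfl | hx
      · exact Set.mem_insert _ _
      · exact ha x hx
    · rw [List.prod_cons, hb, ← mul_assoc, tgen_sq, one_mul]
  obtain ⟨k, hk, he⟩ := classify n w hw
    (fun i a b => right_asc (n + 1) w hword i a (h1 i ⟨a, by omega⟩))
    (fun i a b => left_asc (n + 1) w hword i ⟨by omega, by omega⟩ (h2 i ⟨a, by omega⟩))
    (left_t (n + 1) w hword h3)
  rcases Nat.lt_or_ge k n with h | h
  · exact absurd (he ▸ bel_mem (n + 1) k (by omega)) h4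
  · obtain rfl : k = n := by omega
    exact he
end
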